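/- arXiv:1108.2147 — 4 statements merged into one kernel-verified Lean document; each statement's English description precedes it below -/
import Mathlib

section
/- Let f, g ∈ A(S) be p.m.p. actions of the free group F_S. Then f weakly contains g if and only if the following holds: for all m, n, k, l ≥ 1, every δ > 0, every finite set F ⊆ F_S, and all Borel partitions A : X → {1,…,k} and B : X → {1,…,l}, there exist Borel partitions C : X → {1,…,k} and D : X → {1,…,l} such that for all indices 1 ≤ r_1,…,r_m ≤ k, 1 ≤ q_1,…,q_n ≤ l and all group elements γ_1,…,γ_m ∈ F, δ_1,…,δ_n ∈ F one has |μ(⋂_{i=1}^m f_{γ_i}(C_{r_i}) ∩ ⋂_{j=1}^n f_{δ_j}(D_{q_j})) − μ(⋂_{i=1}^m g_{γ_i}(A_{r_i}) ∩ ⋂_{j=1}^n g_{δ_j}(B_{q_j}))| < δ, where A_k = A⁻¹(k) etc. -/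
open MeasureTheory

/-- A probability-measure-preserving action of a group `G` on a measure space. -/
structure PMP (G : Type*) [Group G] (X : Type*) [MeasurableSpace X] (μ : Measure X) where
  act : G → X → X
  measurable : ∀ γ, Measurable (act γ)
  preserves : ∀ γ, MeasurePreserving (act γ) μ μ
  act_one : ∀ x, act 1 x = x
  act_mul : ∀ γ₁ γ₂ x, act (γ₁ * γ₂) x = act γ₁ (act γ₂ x)

/-- `f` weakly contains `g`. -/
def WeaklyContains {G : Type*} [Group G] {X Y : Type*} [MeasurableSpace X] [MeasurableSpace Y]
    {μ : Measure X} {ν : Measure Y} (f : PMP G X μ) (g : PMP G Y ν) : Prop :=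
  ∀ n : ℕ, 1 ≤ n → ∀ C : Y → Fin n, Measurable C →
    ∀ F : Finset G, ∀ ε : ℝ, 0 < ε →
      ∃ D : X → Fin n, Measurable D ∧
        ∀ i j : Fin n, ∀ γ ∈ F,
          |(μ (f.act γ '' (D ⁻¹' {i}) ∩ D ⁻¹' {j})).toReal -
            (ν (g.act γ '' (C ⁻¹' {i}) ∩ C ⁻¹' {j})).toReal| ≤ ε

/-!
For the hard direction, encode a partition `P` of `Y` and the map `y ↦ (γ ↦ P (γ⁻¹ y))`, `γ ∈ F`,
as one partition `y ↦ (P y, γ ↦ P (γ⁻¹ y))`, and let `x ↦ (P' x, w x)` simulate it. Compatibility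
`P' (γ⁻¹ x) = w x γ` of the two coordinates concerns only the pair of points `γ⁻¹ x` and `x`, so
weak containment transfers it from `g` to `f` up to small measure. Hence `γ ↦ P' (γ⁻¹ x)` is equal
to `w x` for most `x`, and its distribution is close to that of `γ ↦ P (γ⁻¹ y)`.
-/

theorem abs_measureReal_preimage_sub_le_card_mul
    {X Y V : Type*} [MeasurableSpace X] [MeasurableSpace Y] [Fintype V]
    [MeasurableSpace V] [MeasurableSingletonClass V]
    {μ : Measure X} [IsFiniteMeasure μ] {ν : Measure Y} [IsFiniteMeasure ν]
    {P : X → V} {Q : Y → V} (hP : Measurable P) (hQ : Measurable Q) {ε : ℝ}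
    (h : ∀ v, |μ.real (P ⁻¹' {v}) - ν.real (Q ⁻¹' {v})| ≤ ε) (T : Set V) :
    |μ.real (P ⁻¹' T) - ν.real (Q ⁻¹' T)| ≤ Fintype.card V * ε := by
  classical
  have hsum_P : ∑ v ∈ T.toFinset, μ.real (P ⁻¹' {v}) = μ.real (P ⁻¹' T) := by
    rw [sum_measureReal_preimage_singleton _ fun v _ => hP (measurableSet_singleton v),
      Set.coe_toFinset]
  have hsum_Q : ∑ v ∈ T.toFinset, ν.real (Q ⁻¹' {v}) = ν.real (Q ⁻¹' T) := by
    rw [sum_measureReal_preimage_singleton _ fun v _ => hQ (measurableSet_singleton v),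
      Set.coe_toFinset]
  calc |μ.real (P ⁻¹' T) - ν.real (Q ⁻¹' T)|
      = |∑ v ∈ T.toFinset, (μ.real (P ⁻¹' {v}) - ν.real (Q ⁻¹' {v}))| := by
        rw [Finset.sum_sub_distrib, hsum_P, hsum_Q]
    _ ≤ ∑ v ∈ T.toFinset, |μ.real (P ⁻¹' {v}) - ν.real (Q ⁻¹' {v})| :=
        Finset.abs_sum_le_sum_abs _ _
    _ ≤ ∑ v, |μ.real (P ⁻¹' {v}) - ν.real (Q ⁻¹' {v})| :=
        Finset.sum_le_univ_sum_of_nonneg fun _ => abs_nonneg _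
    _ ≤ Fintype.card V * ε :=
        (Finset.sum_le_card_nsmul _ _ _ fun v _ => h v).trans_eq (nsmul_eq_mul _ _)

theorem abs_measureReal_preimage_sub_le_measureReal_ne {X V : Type*} [MeasurableSpace X]
    [MeasurableSpace V] {μ : Measure X} [IsFiniteMeasure μ] {P Q : X → V} (hP : Measurable P)
    (hQ : Measurable Q) {T : Set V} (hT : MeasurableSet T) :
    |μ.real (P ⁻¹' T) - μ.real (Q ⁻¹' T)| ≤ μ.real {x | P x ≠ Q x} := by
  refine (abs_measureReal_sub_le_measureReal_symmDiff (hP hT).nullMeasurableSet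
    (hQ hT).nullMeasurableSet).trans (measureReal_mono ?_)
  rintro x (⟨hxP, hxQ⟩ | ⟨hxQ, hxP⟩) hx
  · exact hxQ (show Q x ∈ T from hx ▸ hxP)
  · exact hxP (show P x ∈ T from hx.symm ▸ hxQ)

namespace PMP

variable {G X V : Type*} [Group G] [MeasurableSpace X] {μ : Measure X} (f : PMP G X μ)

theorem image_act_eq_preimage (γ : G) (s : Set X) : f.act γ '' s = f.act γ⁻¹ ⁻¹' s :=
  congrFun (Set.image_eq_preimage_of_inverse
    (fun x => by rw [← f.act_mul, inv_mul_cancel, f.act_one])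
    (fun x => by rw [← f.act_mul, mul_inv_cancel, f.act_one])) s

/-- The `F`-name of a point with respect to the partition `P`: its value at `γ` is the class
containing `γ⁻¹ x`, so that `itinerary f F P x γ = v` means `x ∈ f.act γ '' (P ⁻¹' {v})`. -/
def itinerary (F : Finset G) (P : X → V) (x : X) (γ : F) : V :=
  P (f.act (γ : G)⁻¹ x)

theorem measurable_itinerary [MeasurableSpace V] (F : Finset G) {P : X → V} (hP : Measurable P) :
    Measurable (f.itinerary F P) :=
  measurable_pi_lambda _ fun _ => hP.comp (f.measurable _)

theorem iInter_image_inter_iInter_image_eq_itinerary_preimage {K L ι κ : Type*} (F : Finset G)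
    (C : X → K) (D : X → L) (r : ι → K) (q : κ → L) (γ : ι → F) (η : κ → F) :
    (⋂ i, f.act (γ i) '' (C ⁻¹' {r i})) ∩ ⋂ j, f.act (η j) '' (D ⁻¹' {q j}) =
      f.itinerary F (fun x => (C x, D x)) ⁻¹'
        {w | (∀ i, (w (γ i)).1 = r i) ∧ ∀ j, (w (η j)).2 = q j} := by
  ext x
  simp only [image_act_eq_preimage, itinerary, Set.mem_inter_iff, Set.mem_iInter,
    Set.mem_preimage, Set.mem_singleton_iff, Set.mem_ofPred_eq]

theorem iInter_image_pair_inter_iInter_image_subsingleton {K L κ : Type*} [Subsingleton L]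
    (C : X → K) (D : X → L) (i j : K) (q : κ → L) (γ : G) (η : κ → G) :
    (⋂ a, f.act (![γ, 1] a) '' (C ⁻¹' {![i, j] a})) ∩ ⋂ b, f.act (η b) '' (D ⁻¹' {q b}) =
      f.act γ '' (C ⁻¹' {i}) ∩ C ⁻¹' {j} := by
  ext x
  simp [image_act_eq_preimage, Fin.forall_fin_two, f.act_one, eq_iff_true_of_subsingleton]

end PMP

namespace WeaklyContains

variable {G X Y V : Type*} [Group G] [MeasurableSpace X] [MeasurableSpace Y]
  [Finite V] [Nonempty V] [MeasurableSpace V] [MeasurableSingletonClass V]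
  {μ : Measure X} {ν : Measure Y} {f : PMP G X μ} {g : PMP G Y ν}

theorem exists_measurable_abs_sub_preimage_singleton_le (h : WeaklyContains f g) {P : Y → V}
    (hP : Measurable P) (F : Finset G) {ε : ℝ} (hε : 0 < ε) :
    ∃ P' : X → V, Measurable P' ∧ ∀ γ ∈ F, ∀ v : V × V,
      |μ.real ((fun x => (P' (f.act γ⁻¹ x), P' x)) ⁻¹' {v}) -
        ν.real ((fun y => (P (g.act γ⁻¹ y), P y)) ⁻¹' {v})| ≤ ε := by
  let e := Finite.equivFin V
  obtain ⟨D, hD, hDP⟩ := h (Nat.card V) Nat.card_pos (e ∘ P) ((measurable_of_finite e).comp hP)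
    F ε hε
  refine ⟨e.symm ∘ D, (measurable_of_finite e.symm).comp hD, fun γ hγ v => ?_⟩
  have hf : (fun x => ((e.symm ∘ D) (f.act γ⁻¹ x), (e.symm ∘ D) x)) ⁻¹' {v} =
      f.act γ '' (D ⁻¹' {e v.1}) ∩ D ⁻¹' {e v.2} := by
    ext x
    simp [f.image_act_eq_preimage, Prod.ext_iff, Equiv.symm_apply_eq]
  have hg : (fun y => (P (g.act γ⁻¹ y), P y)) ⁻¹' {v} =
      g.act γ '' ((e ∘ P) ⁻¹' {e v.1}) ∩ (e ∘ P) ⁻¹' {e v.2} := by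
    ext y
    simp [g.image_act_eq_preimage, Prod.ext_iff]
  rw [hf, hg]
  exact hDP (e v.1) (e v.2) γ hγ

variable [IsFiniteMeasure μ] [IsFiniteMeasure ν]

theorem exists_measurable_abs_sub_preimage_le (h : WeaklyContains f g) {P : Y → V}
    (hP : Measurable P) (F : Finset G) {ε : ℝ} (hε : 0 < ε) :
    ∃ P' : X → V, Measurable P' ∧ ∀ γ ∈ F, ∀ T : Set (V × V),
      |μ.real ((fun x => (P' (f.act γ⁻¹ x), P' x)) ⁻¹' T) -
        ν.real ((fun y => (P (g.act γ⁻¹ y), P y)) ⁻¹' T)| ≤ ε := by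
  have := Fintype.ofFinite V
  obtain ⟨ε', hε', hlt⟩ := exists_pos_mul_lt hε (Fintype.card (V × V) : ℝ)
  obtain ⟨P', hP', hsim⟩ := h.exists_measurable_abs_sub_preimage_singleton_le hP F hε'
  exact ⟨P', hP', fun γ hγ T => (abs_measureReal_preimage_sub_le_card_mul
    ((hP'.comp (f.measurable _)).prodMk hP') ((hP.comp (g.measurable _)).prodMk hP)
    (hsim γ hγ) T).trans hlt.le⟩

theorem exists_measurable_itinerary_ne_le (h : WeaklyContains f g) {P : Y → V}
    (hP : Measurable P) (F : Finset G) {ε : ℝ} (hε : 0 < ε) :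
    ∃ (P' : X → V) (w : X → F → V), Measurable P' ∧ Measurable w ∧
      μ.real {x | f.itinerary F P' x ≠ w x} ≤ F.card * ε ∧
      ∀ T : Set (F → V), |μ.real (w ⁻¹' T) - ν.real (g.itinerary F P ⁻¹' T)| ≤ ε := by
  classical
  obtain ⟨D, hD, hsim⟩ := h.exists_measurable_abs_sub_preimage_le
    (hP.prodMk (g.measurable_itinerary F hP)) (insert 1 F) hε
  refine ⟨fun x => (D x).1, fun x => (D x).2, hD.fst, hD.snd, ?_, fun T => ?_⟩
  · have hne (γ : F) : μ.real {x | (D (f.act (γ : G)⁻¹ x)).1 ≠ (D x).2 γ} ≤ ε := by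
      have hγ := hsim γ (Finset.mem_insert_of_mem γ.2) {p | p.1.1 ≠ p.2.2 γ}
      simp only [PMP.itinerary, Set.preimage_ofPred_eq, ne_eq, not_true_eq_false,
        Set.ofPred_false, measureReal_empty, sub_zero] at hγ
      exact (le_abs_self _).trans hγ
    calc μ.real {x | f.itinerary F (fun x => (D x).1) x ≠ (D x).2}
        = μ.real (⋃ γ : F, {x | (D (f.act (γ : G)⁻¹ x)).1 ≠ (D x).2 γ}) := by
          congr 1
          ext x
          simp only [Set.mem_ofPred_eq, Set.mem_iUnion, Function.ne_iff, PMP.itinerary]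
      _ ≤ ∑ γ : F, μ.real {x | (D (f.act (γ : G)⁻¹ x)).1 ≠ (D x).2 γ} :=
          measureReal_iUnion_fintype_le _
      _ ≤ F.card * ε := by
          simpa only [nsmul_eq_mul, Finset.card_univ, Fintype.card_coe] using
            Finset.sum_le_card_nsmul Finset.univ _ _ fun γ _ => hne γ
  · exact hsim 1 (Finset.mem_insert_self _ _) {p | p.2.2 ∈ T}

theorem exists_measurable_abs_sub_itinerary_lt (h : WeaklyContains f g) {P : Y → V}
    (hP : Measurable P) (F : Finset G) {δ : ℝ} (hδ : 0 < δ) :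
    ∃ P' : X → V, Measurable P' ∧ ∀ T : Set (F → V),
      |μ.real (f.itinerary F P' ⁻¹' T) - ν.real (g.itinerary F P ⁻¹' T)| < δ := by
  obtain ⟨ε, hε, hlt⟩ := exists_pos_mul_lt hδ (F.card + 1 : ℝ)
  obtain ⟨P', w, hP', hw, hne, hsim⟩ := h.exists_measurable_itinerary_ne_le hP F hε
  refine ⟨P', hP', fun T => ?_⟩
  calc |μ.real (f.itinerary F P' ⁻¹' T) - ν.real (g.itinerary F P ⁻¹' T)|
      ≤ |μ.real (f.itinerary F P' ⁻¹' T) - μ.real (w ⁻¹' T)| +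
          |μ.real (w ⁻¹' T) - ν.real (g.itinerary F P ⁻¹' T)| := abs_sub_le _ _ _
    _ ≤ F.card * ε + ε := add_le_add
        ((abs_measureReal_preimage_sub_le_measureReal_ne (f.measurable_itinerary F hP') hw
          T.toFinite.measurableSet).trans hne)
        (hsim T)
    _ = (F.card + 1) * ε := by ring
    _ < δ := hlt

end WeaklyContains

theorem weaklyContains_iff_higher_simulation_general
    {G X Y : Type*} [Group G] [MeasurableSpace X] [MeasurableSpace Y]
    {μ : Measure X} [IsFiniteMeasure μ] {ν : Measure Y} [IsFiniteMeasure ν]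
    (f : PMP G X μ) (g : PMP G Y ν) :
    WeaklyContains f g ↔
      ∀ m n k l : ℕ, 1 ≤ m → 1 ≤ n → 1 ≤ k → 1 ≤ l →
        ∀ δ : ℝ, 0 < δ → ∀ F : Finset G,
          ∀ A : Y → Fin k, ∀ B : Y → Fin l, Measurable A → Measurable B →
            ∃ C : X → Fin k, ∃ D : X → Fin l, Measurable C ∧ Measurable D ∧
              ∀ (r : Fin m → Fin k) (q : Fin n → Fin l) (γ : Fin m → G) (η : Fin n → G),
                (∀ i, γ i ∈ F) → (∀ j, η j ∈ F) →
                |(μ ((⋂ i, f.act (γ i) '' (C ⁻¹' {r i})) ∩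
                      ⋂ j, f.act (η j) '' (D ⁻¹' {q j}))).toReal -
                  (ν ((⋂ i, g.act (γ i) '' (A ⁻¹' {r i})) ∩
                      ⋂ j, g.act (η j) '' (B ⁻¹' {q j}))).toReal| < δ := by
  classical
  constructor
  · intro h m n k l _ _ hk hl δ hδ F A B hA hB
    have : NeZero k := ⟨by lia⟩
    have : NeZero l := ⟨by lia⟩
    obtain ⟨P, hP, hsim⟩ := h.exists_measurable_abs_sub_itinerary_lt (hA.prodMk hB) F hδ
    refine ⟨fun x => (P x).1, fun x => (P x).2, hP.fst, hP.snd, fun r q γ η hγ hη => ?_⟩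
    lift γ to Fin m → F using hγ
    lift η to Fin n → F using hη
    simp only [PMP.iInter_image_inter_iInter_image_eq_itinerary_preimage]
    exact hsim _
  · intro h n hn C hC F ε hε
    obtain ⟨D, E, hD, -, hsim⟩ := h 2 1 n 1 one_le_two le_rfl hn le_rfl ε hε (insert 1 F) C
      (fun _ => 0) hC measurable_const
    refine ⟨D, hD, fun i j γ hγ => ?_⟩
    have hij := hsim ![i, j] ![0] ![γ, 1] ![1] (by simp [Fin.forall_fin_two, hγ]) (by simp)
    simp only [PMP.iInter_image_pair_inter_iInter_image_subsingleton] at hij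
    exact hij.le

theorem weaklyContains_iff_higher_simulation
    {S X : Type} [Fintype S] [MeasurableSpace X] [StandardBorelSpace X]
    {μ : Measure X} [IsProbabilityMeasure μ]
    (f g : PMP (FreeGroup S) X μ) :
    WeaklyContains f g ↔
      ∀ m n k l : ℕ, 1 ≤ m → 1 ≤ n → 1 ≤ k → 1 ≤ l →
        ∀ δ : ℝ, 0 < δ → ∀ F : Finset (FreeGroup S),
          ∀ A : X → Fin k, ∀ B : X → Fin l, Measurable A → Measurable B →
            ∃ C : X → Fin k, ∃ D : X → Fin l, Measurable C ∧ Measurable D ∧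
              ∀ (r : Fin m → Fin k) (q : Fin n → Fin l)
                (γ : Fin m → FreeGroup S) (η : Fin n → FreeGroup S),
                (∀ i, γ i ∈ F) → (∀ j, η j ∈ F) →
                |(μ ((⋂ i, f.act (γ i) '' (C ⁻¹' {r i})) ∩
                      ⋂ j, f.act (η j) '' (D ⁻¹' {q j}))).toReal -
                  (μ ((⋂ i, g.act (γ i) '' (A ⁻¹' {r i})) ∩
                      ⋂ j, g.act (η j) '' (B ⁻¹' {q j}))).toReal| < δ :=
  weaklyContains_iff_higher_simulation_general f g
end

section
/- Let f ∈ A(S) be a p.m.p. action of the free group F_S, let r > 0 be an integer and δ > 0. Then there exists a finite Borel partition X = L_1 ∪ ⋯ ∪ L_n ∪ E such that: (1) μ(E) < δ; (2) for each i there is an equivalence relation P_i on the set W^{r,S} of reduced words of length at most r in F_S such that for every x ∈ L_i and all w_1, w_2 ∈ W^{r,S}, f_{w_1}(x) = f_{w_2}(x) if and only if w_1 P_i w_2; and (3) for each i and all w_1, w_2 ∈ W^{r,S} with w_1 not P_i-equivalent to w_2, the sets f_{w_1}(L_i) and f_{w_2}(L_i) are disjoint (up to null sets). -/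
open MeasureTheory

/-- The set `W^{r,S}` of reduced words of length at most `r` in the free group on `S`. -/
def Wball (S : Type) [DecidableEq S] (r : ℕ) : Set (FreeGroup S) := {w | FreeGroup.norm w ≤ r}

/-!
Embed `X` measurably into `ℕ → Bool` and colour each point by the first `N` bits of its image. For
large `N` the colours distinguish all distinct points among the finitely many `f_w(x)`, except for
`x` in a set `E` of small measure. Off `E`, group the points `x` by the pattern of coincidences
among the `f_w(x)` together with the list of their colours. If `f_{w₁}(x) = f_{w₂}(y)` for `x`, `y`
in one cell, then `f_{w₂}(x)` has the colour of `f_{w₂}(y) = f_{w₁}(x)`, so `f_{w₂}(x) = f_{w₁}(x)`.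
-/

open Filter Topology
open scoped Function
open MeasurableSpace (CountablySeparated measurable_injection_nat_bool_of_countablySeparated)

section Cells

variable {ι X Y Z : Type*}

/-- The set of points `x` for which the colouring `q` fails to distinguish two distinct points of
the family `a i x`; for the maps `f_w` it is the exceptional set `E` of the partition. -/
def collisionSet (a : ι → X → Y) (q : Y → Z) : Set X :=
  {x | ∃ i j, a i x ≠ a j x ∧ q (a i x) = q (a j x)}

/-- The type of a point `x`: the pattern of coincidences among the points `a i x`, which is the
relation `P_i` of the theorem, paired with their colours under `q`. -/
def colouredType (a : ι → X → Y) (q : Y → Z) (x : X) : Setoid ι × (ι → Z) :=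
  (Setoid.ker fun i => a i x, fun i => q (a i x))

/-- The set of points of coloured type `t` outside the collision set; for the maps `f_w` these are
the sets `L_i` of the partition. -/
def typeCell (a : ι → X → Y) (q : Y → Z) (t : Setoid ι × (ι → Z)) : Set X :=
  colouredType a q ⁻¹' {t} \ collisionSet a q

theorem pairwise_disjoint_typeCell (a : ι → X → Y) (q : Y → Z) :
    Pairwise (Disjoint on typeCell a q) :=
  fun _ _ hst => ((Set.disjoint_singleton.2 hst).preimage _).mono Set.sdiff_subset Set.sdiff_subset

theorem iUnion_typeCell_union_collisionSet (a : ι → X → Y) (q : Y → Z) :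
    (⋃ t, typeCell a q t) ∪ collisionSet a q = Set.univ := by
  simp only [typeCell, ← Set.iUnion_sdiff, ← Set.preimage_iUnion, Set.iUnion_of_singleton,
    Set.preimage_univ, Set.sdiff_union_self, Set.univ_union]

theorem eq_iff_of_mem_typeCell {a : ι → X → Y} {q : Y → Z} {t : Setoid ι × (ι → Z)} {x : X}
    (hx : x ∈ typeCell a q t) (i j : ι) : a i x = a j x ↔ t.1 i j := by
  rw [← show colouredType a q x = t from hx.1]
  rfl

theorem colour_eq_of_mem_typeCell {a : ι → X → Y} {q : Y → Z} {t : Setoid ι × (ι → Z)} {x : X}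
    (hx : x ∈ typeCell a q t) (i : ι) : q (a i x) = t.2 i :=
  congrFun (congrArg Prod.snd hx.1) i

theorem eq_of_colour_eq_of_notMem_collisionSet {a : ι → X → Y} {q : Y → Z} {x : X} {i j : ι}
    (hx : x ∉ collisionSet a q) (h : q (a i x) = q (a j x)) : a i x = a j x :=
  by_contra fun hne => hx ⟨i, j, hne, h⟩

theorem disjoint_image_typeCell {a : ι → X → Y} {q : Y → Z} {t : Setoid ι × (ι → Z)} {i j : ι}
    (hij : ¬ t.1 i j) : Disjoint (a i '' typeCell a q t) (a j '' typeCell a q t) := by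
  rw [Set.disjoint_left]
  rintro _ ⟨x, hx, rfl⟩ ⟨y, hy, hyx⟩
  have hcolour : q (a i x) = q (a j x) := by
    rw [← hyx, colour_eq_of_mem_typeCell hy, colour_eq_of_mem_typeCell hx]
  have heq : a i x = a j x := eq_of_colour_eq_of_notMem_collisionSet hx.2 hcolour
  exact hij ((eq_iff_of_mem_typeCell hx i j).1 heq)

end Cells

section Measurability

variable {ι X Y Z : Type*} [MeasurableSpace X] [MeasurableSpace Y] [MeasurableEq Y]
  [MeasurableSpace Z] {a : ι → X → Y} {q : Y → Z}

theorem measurableSet_collisionSet [Countable ι] [MeasurableEq Z] (ha : ∀ i, Measurable (a i))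
    (hq : Measurable q) : MeasurableSet (collisionSet a q) :=
  measurableSet_setOfPred.2 <| .exists fun i => .exists fun j =>
    ((ha i).eq (ha j)).not.and ((hq.comp (ha i)).eq (hq.comp (ha j)))

theorem measurableSet_preimage_colouredType [Countable ι] [MeasurableSingletonClass Z]
    (ha : ∀ i, Measurable (a i)) (hq : Measurable q) (t : Setoid ι × (ι → Z)) :
    MeasurableSet (colouredType a q ⁻¹' {t}) := by
  have heq : colouredType a q ⁻¹' {t} =
      {x | (∀ i j, a i x = a j x ↔ t.1 i j) ∧ ∀ i, q (a i x) = t.2 i} := by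
    ext x
    simp only [colouredType, Set.mem_preimage, Set.mem_singleton_iff, Prod.ext_iff, Setoid.ext_iff,
      Setoid.ker_def, funext_iff, Set.mem_ofPred_eq]
  rw [heq]
  exact measurableSet_setOfPred.2 <|
    .and (.forall fun i => .forall fun j => ((ha i).eq (ha j)).iff measurable_const)
      (.forall fun i => (hq.comp (ha i)).eq_const _)

theorem measurableSet_typeCell [Countable ι] [MeasurableEq Z] (ha : ∀ i, Measurable (a i))
    (hq : Measurable q) (t : Setoid ι × (ι → Z)) : MeasurableSet (typeCell a q t) :=
  (measurableSet_preimage_colouredType ha hq t).diff (measurableSet_collisionSet ha hq)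

theorem tendsto_measure_collisionSet [Finite ι] {μ : Measure X} [IsFiniteMeasure μ]
    {κ : Type*} {l : Filter κ} [l.IsCountablyGenerated] {Z : κ → Type*}
    [∀ k, MeasurableSpace (Z k)] [∀ k, MeasurableEq (Z k)] {q : ∀ k, Y → Z k}
    (ha : ∀ i, Measurable (a i)) (hq : ∀ k, Measurable (q k))
    (hsep : ∀ y z, y ≠ z → ∀ᶠ k in l, q k y ≠ q k z) :
    Tendsto (fun k => μ (collisionSet a (q k))) l (𝓝 0) := by
  rw [← measure_empty (μ := μ)]
  refine tendsto_measure_of_tendsto_indicator_of_isFiniteMeasure l μ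
    (fun k => measurableSet_collisionSet ha (hq k)) fun x => ?_
  have hcolour : ∀ᶠ k in l, ∀ i j, a i x ≠ a j x → q k (a i x) ≠ q k (a j x) := by
    simpa only [eventually_all] using fun i j => hsep (a i x) (a j x)
  filter_upwards [hcolour] with k hk
  exact iff_of_false (fun ⟨i, j, hne, heq⟩ => hk i j hne heq) (Set.notMem_empty x)

end Measurability

theorem measurableEq_of_countablySeparated (Y : Type*) [MeasurableSpace Y]
    [CountablySeparated Y] : MeasurableEq Y := by
  obtain ⟨g, hg, hinj⟩ := measurable_injection_nat_bool_of_countablySeparated Y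
  have hdiag : Set.diagonal Y = Prod.map g g ⁻¹' Set.diagonal (ℕ → Bool) :=
    Set.ext fun _ => hinj.eq_iff.symm
  exact ⟨hdiag ▸ measurableSet_diagonal.preimage (hg.prodMap hg)⟩

theorem exists_measurable_eventually_separating (Y : Type*) [MeasurableSpace Y]
    [CountablySeparated Y] : ∃ q : ∀ n, Y → Fin n → Bool,
      (∀ n, Measurable (q n)) ∧ ∀ y z, y ≠ z → ∀ᶠ n in atTop, q n y ≠ q n z := by
  obtain ⟨g, hg, hinj⟩ := measurable_injection_nat_bool_of_countablySeparated Y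
  refine ⟨fun n y k => g y k,
    fun n => measurable_pi_iff.2 fun k => (measurable_pi_apply _).comp hg, fun y z hyz => ?_⟩
  obtain ⟨k, hk⟩ := Function.ne_iff.1 (hinj.ne hyz)
  filter_upwards [eventually_gt_atTop k] with n hn
  exact Function.ne_iff.2 ⟨⟨k, hn⟩, hk⟩

theorem finite_setoid (ι : Type*) [Finite ι] : Finite (Setoid ι) :=
  .of_injective (fun s : Setoid ι => ⇑s) fun _ _ => Setoid.eq_iff_rel_eq.2

theorem finite_wball (S : Type) [Finite S] [DecidableEq S] (r : ℕ) : (Wball S r).Finite :=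
  (List.finite_length_le (S × Bool) r).preimage FreeGroup.toWord_injective.injOn

theorem exists_partition_with_types_general {ι X Y : Type*} [Finite ι] [MeasurableSpace X]
    [MeasurableSpace Y] [CountablySeparated Y] {μ : Measure X} [IsFiniteMeasure μ]
    {a : ι → X → Y} (ha : ∀ i, Measurable (a i)) {ε : ENNReal} (hε : 0 < ε) :
    ∃ (n : ℕ) (L : Fin n → Set X) (E : Set X),
      (∀ k, MeasurableSet (L k)) ∧ MeasurableSet E ∧
      Pairwise (Disjoint on L) ∧ (∀ k, Disjoint (L k) E) ∧
      (⋃ k, L k) ∪ E = Set.univ ∧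
      μ E < ε ∧
      ∀ k, ∃ P : Setoid ι,
        (∀ x ∈ L k, ∀ i j, a i x = a j x ↔ P i j) ∧
        ∀ i j, ¬ P i j → Disjoint (a i '' L k) (a j '' L k) := by
  have := measurableEq_of_countablySeparated Y
  have := finite_setoid ι
  obtain ⟨q, hq, hsep⟩ := exists_measurable_eventually_separating Y
  obtain ⟨N, hN⟩ :=
    ((tendsto_measure_collisionSet (μ := μ) ha hq hsep).eventually_lt_const hε).exists
  obtain ⟨n, ⟨e⟩⟩ := Finite.exists_equiv_fin (Setoid ι × (ι → Fin N → Bool))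
  refine ⟨n, fun k => typeCell a (q N) (e.symm k), collisionSet a (q N),
    fun k => measurableSet_typeCell ha (hq N) _, measurableSet_collisionSet ha (hq N),
    (pairwise_disjoint_typeCell a (q N)).comp_of_injective e.symm.injective,
    fun k => Set.disjoint_sdiff_left, ?_, hN,
    fun k => ⟨(e.symm k).1, fun x hx => eq_iff_of_mem_typeCell hx,
      fun i j => disjoint_image_typeCell⟩⟩
  rw [e.symm.surjective.iUnion_comp (typeCell a (q N)), iUnion_typeCell_union_collisionSet]

theorem exists_partition_with_types
    {S X : Type} [Fintype S] [DecidableEq S] [MeasurableSpace X] [StandardBorelSpace X]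
    {μ : Measure X} [IsProbabilityMeasure μ]
    (f : PMP (FreeGroup S) X μ) (r : ℕ) (hr : 0 < r) (δ : ℝ) (hδ : 0 < δ) :
    ∃ (n : ℕ) (L : Fin n → Set X) (E : Set X),
      (∀ i, MeasurableSet (L i)) ∧ MeasurableSet E ∧
      (∀ i j, i ≠ j → Disjoint (L i) (L j)) ∧ (∀ i, Disjoint (L i) E) ∧
      ((⋃ i, L i) ∪ E = Set.univ) ∧
      (μ E).toReal < δ ∧
      ∀ i : Fin n, ∃ P : Wball S r → Wball S r → Prop,
        Equivalence P ∧
        (∀ x ∈ L i, ∀ w₁ w₂ : Wball S r,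
          (f.act ↑w₁ x = f.act ↑w₂ x ↔ P w₁ w₂)) ∧
        (∀ w₁ w₂ : Wball S r, ¬ P w₁ w₂ →
          μ (f.act ↑w₁ '' L i ∩ f.act ↑w₂ '' L i) = 0) := by
  have := (finite_wball S r).to_subtype
  obtain ⟨n, L, E, hL, hE, hLL, hLE, hcover, hμE, htypes⟩ :=
    exists_partition_with_types_general (μ := μ) (fun w : Wball S r => f.measurable w)
      (ENNReal.ofReal_pos.2 hδ)
  refine ⟨n, L, E, hL, hE, hLL, hLE, hcover, ENNReal.toReal_lt_of_lt_ofReal hμE, fun k => ?_⟩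
  obtain ⟨P, hP, hdisj⟩ := htypes k
  refine ⟨P, P.iseqv, hP, fun w₁ w₂ hw => ?_⟩
  rw [(hdisj w₁ w₂ hw).inter_eq, measure_empty]
end

section
/- If f ∈ A(S) weakly contains h ∈ A(S), then there exists g ∈ A(S) that is weakly equivalent to f and that contains h as a factor: there exists a Borel map π : X → X with π_*μ = μ such that for every γ ∈ F_S, π(g_γ(x)) = h_γ(π(x)) for μ-almost every x ∈ X. -/
open MeasureTheory

/-- Weak equivalence of p.m.p. actions. -/
def WeaklyEquivalent {G : Type*} [Group G] {X Y : Type*} [MeasurableSpace X] [MeasurableSpace Y]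
    {μ : Measure X} {ν : Measure Y} (f : PMP G X μ) (g : PMP G Y ν) : Prop :=
  WeaklyContains f g ∧ WeaklyContains g f

/-!
Code the factor `h` by binary labels, so that a point of its space becomes a point of the shift over
`G`. Weak containment provides labellings `D i` of `X` whose codes under `f` converge in
distribution to the code of `h`. Fix moreover a labelling `e` that separates the points of `X`, and
let `ρ` be a limit, along an ultrafilter, of the laws of `x ↦ (code f e x, code f (D i) x)`. The
shift acts on `ρ`, its marginals make this action an extension of both `f` and `h`, and it is weakly
contained in `f` because measures of clopen sets pass to the limit.

The extension has to be moved back to `(X, μ)`. An atom `x` of `μ` gives `ρ` an atom of at least the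
same mass, at the limit of the points `(code f e x, code f (D i) x)`. Hence `ρ` projects to `μ`
bijectively over the atoms, while the remaining parts are atomless of equal mass, so that the two
measure spaces are isomorphic modulo null sets and the action can be transported.
-/

open Filter ProbabilityTheory Set Topology
open scoped ENNReal unitInterval

section CumulativeDistribution

theorem monotone_codRestrict_cdf (ν : Measure ℝ) :
    Monotone (codRestrict (cdf ν) I fun x => ⟨cdf_nonneg ν x, cdf_le_one ν x⟩) :=
  fun _ _ hxy => monotone_cdf ν hxy

variable {ν : Measure ℝ} [IsProbabilityMeasure ν]

theorem continuous_cdf [NullSingletonClass ν] : Continuous (cdf ν) := by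
  refine continuous_iff_continuousAt.2 fun x => ?_
  have hjump : ENNReal.ofReal (cdf ν x - Function.leftLim (cdf ν) x) = 0 := by
    rw [← (cdf ν).measure_singleton, measure_cdf, measure_singleton]
  rw [(monotone_cdf ν).continuousAt_iff_leftLim_eq_rightLim, (cdf ν).rightLim_eq]
  exact le_antisymm ((monotone_cdf ν).leftLim_le le_rfl)
    (sub_nonpos.1 (ENNReal.ofReal_eq_zero.1 hjump))

theorem exists_cdf_eq [NullSingletonClass ν] {s : ℝ} (hs : s ∈ Ioo 0 1) : ∃ a, cdf ν a = s :=
  mem_range_of_exists_le_of_exists_ge continuous_cdf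
    (((tendsto_cdf_atBot ν).eventually_le_const hs.1).exists)
    (((tendsto_cdf_atTop ν).eventually_const_le hs.2).exists)

theorem measureReal_cdf_preimage_Iic [NullSingletonClass ν] {s : ℝ} (hs : s ∈ Icc 0 1) :
    ν.real (cdf ν ⁻¹' Iic s) = s := by
  refine le_antisymm (le_of_forall_gt_imp_ge_of_dense fun t hst => ?_)
    (le_of_forall_lt_imp_le_of_dense fun t hts => ?_)
  · rcases le_or_gt 1 t with ht | ht
    · exact measureReal_le_one.trans ht
    · obtain ⟨a, rfl⟩ := exists_cdf_eq (ν := ν) ⟨hs.1.trans_lt hst, ht⟩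
      rw [cdf_eq_real]
      exact measureReal_mono fun x hx => ((monotone_cdf ν).reflect_lt (lt_of_le_of_lt hx hst)).le
  · rcases le_or_gt t 0 with ht | ht
    · exact ht.trans measureReal_nonneg
    · obtain ⟨a, rfl⟩ := exists_cdf_eq (ν := ν) ⟨ht, hts.trans_le hs.2⟩
      rw [cdf_eq_real]
      exact measureReal_mono fun x hx => (monotone_cdf ν hx).trans hts.le

theorem measurePreserving_codRestrict_cdf [NullSingletonClass ν] :
    MeasurePreserving (codRestrict (cdf ν) I fun x => ⟨cdf_nonneg ν x, cdf_le_one ν x⟩)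
      ν volume := by
  have hmeas : Measurable (codRestrict (cdf ν) I fun x => ⟨cdf_nonneg ν x, cdf_le_one ν x⟩) :=
    (monotone_cdf ν).measurable.subtype_mk
  have := Measure.isProbabilityMeasure_map (μ := ν) hmeas.aemeasurable
  refine ⟨hmeas, Measure.ext_of_Iic _ _ fun s => ?_⟩
  rw [Measure.map_apply hmeas measurableSet_Iic, unitInterval.volume_Iic,
    ← measureReal_cdf_preimage_Iic (ν := ν) s.2, ofReal_measureReal]
  rfl

end CumulativeDistribution

section AtomlessMeasures

variable {X Y : Type*} [MeasurableSpace X] [MeasurableSpace Y]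

theorem countable_setOf_measure_singleton_ne_zero [MeasurableSingletonClass X] (μ : Measure X)
    [SFinite μ] : {x | μ {x} ≠ 0}.Countable := by
  simpa only [pos_iff_ne_zero] using
    Measure.countable_meas_pos_of_disjoint_iUnion (μ := μ) (As := fun x : X => {x})
      measurableSet_singleton fun _ _ hxy => disjoint_singleton.2 hxy

theorem nullSingletonClass_restrict_compl_setOf_measure_singleton_ne_zero
    [MeasurableSingletonClass X] (μ : Measure X) :
    NullSingletonClass (μ.restrict {x | μ {x} ≠ 0}ᶜ) := by
  refine ⟨fun x => ?_⟩
  rw [Measure.restrict_apply (measurableSet_singleton x)]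
  by_cases hx : μ {x} = 0
  · exact measure_mono_null inter_subset_left hx
  · rw [singleton_inter_eq_empty.2 (not_not.2 hx), measure_empty]

theorem nullSingletonClass_of_measurePreserving [MeasurableSingletonClass Y] {μ : Measure X}
    {ν : Measure Y} [NullSingletonClass ν] {p : X → Y} (hp : MeasurePreserving p μ ν) :
    NullSingletonClass μ := by
  refine ⟨fun x => measure_mono_null (t := p ⁻¹' {p x}) (by simp) ?_⟩
  rw [hp.measure_preimage (measurableSet_singleton _).nullMeasurableSet, measure_singleton]

theorem nullSingletonClass_map [MeasurableSingletonClass Y] {μ : Measure X}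
    [NullSingletonClass μ] {r : X → Y} (hr : Measurable r) (hinj : Function.Injective r) :
    NullSingletonClass (μ.map r) :=
  ⟨fun y => by
    rw [Measure.map_apply hr (measurableSet_singleton y)]
    exact (subsingleton_singleton.preimage hinj).measure_zero μ⟩

theorem nullSingletonClass_smul (μ : Measure X) [NullSingletonClass μ] (c : ℝ≥0∞) :
    NullSingletonClass (c • μ) :=
  ⟨fun x => by simp⟩

/-- A monotone map can only identify two reals by being constant between them, in particular at a
rational point, so that it is injective off countably many fibres. -/
theorem exists_null_injOn_compl_of_monotone {β : Type*} [PartialOrder β] [MeasurableSpace β]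
    [MeasurableSingletonClass β] {μ : Measure ℝ} {ν : Measure β} [NullSingletonClass ν]
    {T : ℝ → β} (hT : Monotone T) (hpres : MeasurePreserving T μ ν) :
    ∃ N, MeasurableSet N ∧ μ N = 0 ∧ InjOn T Nᶜ := by
  refine ⟨⋃ q : ℚ, T ⁻¹' {T q},
    .iUnion fun q => hpres.measurable (measurableSet_singleton _), ?_, fun a ha b hb hab => ?_⟩
  · refine measure_iUnion_null fun q => ?_
    rw [hpres.measure_preimage (measurableSet_singleton _).nullMeasurableSet, measure_singleton]
  · have eq_of_le : ∀ {a b}, a ∉ ⋃ q : ℚ, T ⁻¹' {T q} → T a = T b → a ≤ b → a = b := by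
      intro a b ha hab hle
      by_contra hne
      obtain ⟨q, haq, hqb⟩ := exists_rat_btwn (lt_of_le_of_ne hle hne)
      exact ha (mem_iUnion.2 ⟨q, le_antisymm (hT haq.le) (hab ▸ hT hqb.le)⟩)
    rcases le_total a b with h | h
    · exact eq_of_le ha hab h
    · exact (eq_of_le hb hab.symm h).symm

end AtomlessMeasures

/-- An isomorphism modulo null sets between measure spaces: a pair of measure-preserving maps
which are mutually inverse almost everywhere. -/
structure MeasureIso {X Y : Type*} [MeasurableSpace X] [MeasurableSpace Y] (μ : Measure X)
    (ν : Measure Y) where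
  toFun : X → Y
  invFun : Y → X
  measurePreserving_toFun : MeasurePreserving toFun μ ν
  measurePreserving_invFun : MeasurePreserving invFun ν μ
  ae_left_inv : ∀ᵐ x ∂μ, invFun (toFun x) = x
  ae_right_inv : ∀ᵐ y ∂ν, toFun (invFun y) = y

namespace MeasureIso

variable {X Y Z : Type*} [MeasurableSpace X] [MeasurableSpace Y] [MeasurableSpace Z]
  {μ : Measure X} {ν : Measure Y} {ρ : Measure Z}

/-- The inverse isomorphism. -/
def symm (Φ : MeasureIso μ ν) : MeasureIso ν μ where
  toFun := Φ.invFun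
  invFun := Φ.toFun
  measurePreserving_toFun := Φ.measurePreserving_invFun
  measurePreserving_invFun := Φ.measurePreserving_toFun
  ae_left_inv := Φ.ae_right_inv
  ae_right_inv := Φ.ae_left_inv

/-- The composition of two isomorphisms. -/
def trans (Φ : MeasureIso μ ν) (Ψ : MeasureIso ν ρ) : MeasureIso μ ρ where
  toFun := Ψ.toFun ∘ Φ.toFun
  invFun := Φ.invFun ∘ Ψ.invFun
  measurePreserving_toFun := Ψ.measurePreserving_toFun.comp Φ.measurePreserving_toFun
  measurePreserving_invFun := Φ.measurePreserving_invFun.comp Ψ.measurePreserving_invFun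
  ae_left_inv := by
    filter_upwards [Φ.ae_left_inv,
      Φ.measurePreserving_toFun.quasiMeasurePreserving.ae Ψ.ae_left_inv] with x hΦ hΨ
    rw [Function.comp_apply, Function.comp_apply, hΨ, hΦ]
  ae_right_inv := by
    filter_upwards [Ψ.ae_right_inv,
      Ψ.measurePreserving_invFun.quasiMeasurePreserving.ae Φ.ae_right_inv] with z hΨ hΦ
    rw [Function.comp_apply, Function.comp_apply, hΦ, hΨ]

/-- Multiplying both measures by the same constant preserves isomorphisms. -/
def smul (Φ : MeasureIso μ ν) (c : ℝ≥0∞) : MeasureIso (c • μ) (c • ν) where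
  toFun := Φ.toFun
  invFun := Φ.invFun
  measurePreserving_toFun := Φ.measurePreserving_toFun.smul_measure c
  measurePreserving_invFun := Φ.measurePreserving_invFun.smul_measure c
  ae_left_inv := Measure.ae_smul_measure Φ.ae_left_inv c
  ae_right_inv := Measure.ae_smul_measure Φ.ae_right_inv c

/-- A measure-preserving map with an almost everywhere left inverse is an isomorphism. -/
def ofAELeftInverse [MeasurableEq Y] {T : X → Y} {T' : Y → X}
    (hT : MeasurePreserving T μ ν) (hT' : Measurable T') (hinv : ∀ᵐ x ∂μ, T' (T x) = x) :
    MeasureIso μ ν where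
  toFun := T
  invFun := T'
  measurePreserving_toFun := hT
  measurePreserving_invFun := ⟨hT', by
    have hid : T' ∘ T =ᵐ[μ] id := hinv
    rw [← hT.map_eq, Measure.map_map hT' hT.measurable, Measure.map_congr hid, Measure.map_id]⟩
  ae_left_inv := hinv
  ae_right_inv := by
    rw [← hT.map_eq]
    refine (ae_map_iff (p := fun y => T (T' y) = y) hT.aemeasurable
      (measurableSet_eq_fun (hT.measurable.comp hT') measurable_id)).2 ?_
    filter_upwards [hinv] with x hx
    rw [hx]

theorem nonempty_of_injOn [StandardBorelSpace X] [Nonempty X]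
    [MeasurableSpace.CountablySeparated Y] [MeasurableEq Y] {T : X → Y}
    (hT : MeasurePreserving T μ ν) {N : Set X} (hN : MeasurableSet N) (hN₀ : μ N = 0)
    (hinj : InjOn T Nᶜ) : Nonempty (MeasureIso μ ν) := by
  have := hN.compl.standardBorel
  have hemb : MeasurableEmbedding (Nᶜ.domRestrict T) :=
    (hT.measurable.comp measurable_subtype_coe).measurableEmbedding (injOn_iff_injective.1 hinj)
  obtain ⟨T', hT', hext⟩ := hemb.exists_measurable_extend measurable_subtype_coe
    fun _ => inferInstance
  refine ⟨ofAELeftInverse hT hT' ?_⟩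
  filter_upwards [measure_eq_zero_iff_ae_notMem.1 hN₀] with x hx
  exact congrFun hext ⟨x, hx⟩

open Classical in
theorem ae_leftInverse_piecewise {A : Set X} {B : Set Y} (hA : MeasurableSet A)
    (hB : MeasurableSet B) (Φ : MeasureIso (μ.restrict A) (ν.restrict B))
    (Ψ : MeasureIso (μ.restrict Aᶜ) (ν.restrict Bᶜ)) :
    ∀ᵐ x ∂μ, B.piecewise Φ.invFun Ψ.invFun (A.piecewise Φ.toFun Ψ.toFun x) = x := by
  have hΦB : ∀ᵐ x ∂μ.restrict A, Φ.toFun x ∈ B :=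
    Φ.measurePreserving_toFun.quasiMeasurePreserving.ae (ae_restrict_mem hB)
  have hΨB : ∀ᵐ x ∂μ.restrict Aᶜ, Ψ.toFun x ∈ Bᶜ :=
    Ψ.measurePreserving_toFun.quasiMeasurePreserving.ae (ae_restrict_mem hB.compl)
  refine ae_of_ae_restrict_of_ae_restrict_compl A ?_ ?_
  · filter_upwards [ae_restrict_mem hA, hΦB, Φ.ae_left_inv] with x hx hxB hinv
    rw [piecewise_eq_of_mem _ _ _ hx, piecewise_eq_of_mem _ _ _ hxB, hinv]
  · filter_upwards [ae_restrict_mem hA.compl, hΨB, Ψ.ae_left_inv] with x hx hxB hinv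
    rw [piecewise_eq_of_notMem _ _ _ hx, piecewise_eq_of_notMem _ _ _ hxB, hinv]

open Classical in
theorem measurePreserving_piecewise {A : Set X} {B : Set Y} (hA : MeasurableSet A)
    (hB : MeasurableSet B) {S T : X → Y}
    (hS : MeasurePreserving S (μ.restrict A) (ν.restrict B))
    (hT : MeasurePreserving T (μ.restrict Aᶜ) (ν.restrict Bᶜ)) :
    MeasurePreserving (A.piecewise S T) μ ν := by
  have hmeas : Measurable (A.piecewise S T) := hS.measurable.piecewise hA hT.measurable
  refine ⟨hmeas, ?_⟩
  rw [← Measure.restrict_add_restrict_compl (μ := μ) hA, Measure.map_add _ _ hmeas,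
    Measure.map_congr (piecewise_ae_eq_restrict hA),
    Measure.map_congr (piecewise_ae_eq_restrict_compl hA), hS.map_eq, hT.map_eq,
    Measure.restrict_add_restrict_compl hB]

open Classical in
/-- Two isomorphisms between complementary parts of two spaces, glued together. -/
noncomputable def glue [MeasurableEq Y] {A : Set X} {B : Set Y} (hA : MeasurableSet A)
    (hB : MeasurableSet B) (Φ : MeasureIso (μ.restrict A) (ν.restrict B))
    (Ψ : MeasureIso (μ.restrict Aᶜ) (ν.restrict Bᶜ)) : MeasureIso μ ν :=
  ofAELeftInverse
    (measurePreserving_piecewise hA hB Φ.measurePreserving_toFun Ψ.measurePreserving_toFun)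
    (Φ.measurePreserving_invFun.measurable.piecewise hB Ψ.measurePreserving_invFun.measurable)
    (ae_leftInverse_piecewise hA hB Φ Ψ)

variable [StandardBorelSpace X] [StandardBorelSpace Y]

theorem nonempty_volume_unitInterval (μ : Measure X) [IsProbabilityMeasure μ]
    [NullSingletonClass μ] : Nonempty (MeasureIso μ (volume : Measure I)) := by
  have hr := measurableEmbedding_embeddingReal X
  have := nonempty_of_isProbabilityMeasure μ
  have := Measure.isProbabilityMeasure_map (μ := μ) hr.measurable.aemeasurable
  have := nullSingletonClass_map (μ := μ) hr.measurable hr.injective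
  obtain ⟨Φ⟩ := nonempty_of_injOn (hr.measurable.measurePreserving μ) .empty measure_empty
    hr.injective.injOn
  obtain ⟨N, hN, hN₀, hinj⟩ := exists_null_injOn_compl_of_monotone
    (monotone_codRestrict_cdf (μ.map (embeddingReal X))) measurePreserving_codRestrict_cdf
  obtain ⟨Ψ⟩ := nonempty_of_injOn measurePreserving_codRestrict_cdf hN hN₀ hinj
  exact ⟨Φ.trans Ψ⟩

theorem nonempty_of_measure_univ_eq [Nonempty X] [Nonempty Y] (μ : Measure X) (ν : Measure Y)
    [IsFiniteMeasure μ] [NullSingletonClass μ] [NullSingletonClass ν]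
    (hmass : μ univ = ν univ) : Nonempty (MeasureIso μ ν) := by
  rcases eq_or_ne μ 0 with rfl | hμ
  · obtain rfl : ν = 0 := Measure.measure_univ_eq_zero.1 (by simpa using hmass.symm)
    exact ⟨ofAELeftInverse (T := fun _ => Classical.arbitrary Y) ⟨measurable_const, by simp⟩
      (measurable_const (a := Classical.arbitrary X)) (by simp)⟩
  set c := μ univ
  have hc₀ : c ≠ 0 := mt Measure.measure_univ_eq_zero.1 hμ
  have hc : c * c⁻¹ = 1 := ENNReal.mul_inv_cancel hc₀ (measure_ne_top _ _)
  have hprobμ : IsProbabilityMeasure (c⁻¹ • μ) :=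
    ⟨by rw [Measure.smul_apply, smul_eq_mul, mul_comm, hc]⟩
  have hprobν : IsProbabilityMeasure (c⁻¹ • ν) :=
    ⟨by rw [Measure.smul_apply, smul_eq_mul, ← hmass, mul_comm, hc]⟩
  have := nullSingletonClass_smul μ c⁻¹
  have := nullSingletonClass_smul ν c⁻¹
  obtain ⟨Φ⟩ := nonempty_volume_unitInterval (c⁻¹ • μ)
  obtain ⟨Ψ⟩ := nonempty_volume_unitInterval (c⁻¹ • ν)
  have hiso := (Φ.trans Ψ.symm).smul c
  rw [smul_smul, smul_smul, hc, one_smul, one_smul] at hiso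
  exact ⟨hiso⟩

theorem ae_section_apply_eq [IsFiniteMeasure ν] {p : Y → X} (hp : MeasurePreserving p ν μ)
    {κ : X → Y} (hsec : ∀ x, p (κ x) = x) (hatom : ∀ x, μ {x} ≤ ν {κ x}) {A : Set X}
    (hA : A.Countable) : ∀ᵐ y ∂ν, p y ∈ A → κ (p y) = y := by
  have hfibre : ∀ x, ν (p ⁻¹' {x} \ {κ x}) = 0 := fun x => by
    rw [measure_sdiff (by simpa using hsec x) (measurableSet_singleton _).nullMeasurableSet
      (measure_ne_top _ _), hp.measure_preimage (measurableSet_singleton _).nullMeasurableSet]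
    exact tsub_eq_zero_of_le (hatom x)
  filter_upwards [measure_eq_zero_iff_ae_notMem.1
    ((measure_biUnion_null_iff hA).2 fun x _ => hfibre x)] with y hy hyA
  by_contra hne
  exact hy (mem_biUnion hyA ⟨rfl, fun h => hne (mem_singleton_iff.1 h).symm⟩)

/-- Over the atoms of the base the extension is concentrated on the section, hence one-to-one, and
both complements are atomless of the same mass. -/
theorem nonempty_of_atom_section [Nonempty X] [IsFiniteMeasure μ] [IsFiniteMeasure ν] {p : Y → X}
    (hp : MeasurePreserving p ν μ) {κ : X → Y} (hsec : ∀ x, p (κ x) = x)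
    (hatom : ∀ x, μ {x} ≤ ν {κ x}) : Nonempty (MeasureIso ν μ) := by
  classical
  set A := {x | μ {x} ≠ 0}
  have hAc : A.Countable := countable_setOf_measure_singleton_ne_zero μ
  have hA : MeasurableSet A := hAc.measurableSet
  have hB : MeasurableSet (p ⁻¹' A) := hp.measurable hA
  let y₀ : Y := κ (Classical.arbitrary X)
  have hκ : Measurable (A.piecewise κ fun _ => y₀) :=
    (measurable_const (a := y₀)).measurable_of_countable_ne <| hAc.mono fun x hx => by
      by_contra hxA
      exact hx (piecewise_eq_of_notMem A κ (fun _ => y₀) hxA).symm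
  have hinv : ∀ᵐ y ∂ν.restrict (p ⁻¹' A), A.piecewise κ (fun _ => y₀) (p y) = y := by
    rw [ae_restrict_iff' hB]
    filter_upwards [ae_section_apply_eq hp hsec hatom hAc] with y hy hyA
    rw [piecewise_eq_of_mem A κ _ (show p y ∈ A from hyA), hy hyA]
  have hpc : MeasurePreserving p (ν.restrict (p ⁻¹' A)ᶜ) (μ.restrict Aᶜ) :=
    hp.restrict_preimage hA.compl
  have := nullSingletonClass_restrict_compl_setOf_measure_singleton_ne_zero μ
  have := nullSingletonClass_of_measurePreserving hpc
  have : Nonempty Y := ⟨y₀⟩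
  obtain ⟨Ψ⟩ := nonempty_of_measure_univ_eq (ν.restrict (p ⁻¹' A)ᶜ) (μ.restrict Aᶜ) <| by
    rw [← hpc.measure_preimage MeasurableSet.univ.nullMeasurableSet, preimage_univ]
  exact ⟨glue hB hA (ofAELeftInverse (hp.restrict_preimage hA) hκ hinv) Ψ⟩

end MeasureIso

section FactorMaps

variable {G X Y Z : Type*} [Group G] [MeasurableSpace X] [MeasurableSpace Y] [MeasurableSpace Z]
  {μ : Measure X} {ν : Measure Y} {ρ : Measure Z}

theorem PMP.act_inv_act (f : PMP G X μ) (γ : G) (x : X) : f.act γ⁻¹ (f.act γ x) = x := by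
  rw [← f.act_mul, inv_mul_cancel, f.act_one]

theorem PMP.act_act_inv (f : PMP G X μ) (γ : G) (x : X) : f.act γ (f.act γ⁻¹ x) = x := by
  rw [← f.act_mul, mul_inv_cancel, f.act_one]

/-- `q` exhibits `g` as a factor of `f`; equivariance is only required almost everywhere. -/
structure IsFactorMap (f : PMP G X μ) (g : PMP G Y ν) (q : X → Y) : Prop where
  measurePreserving : MeasurePreserving q μ ν
  ae_equivariant : ∀ γ, ∀ᵐ x ∂μ, q (f.act γ x) = g.act γ (q x)

theorem IsFactorMap.comp {f : PMP G X μ} {g : PMP G Y ν} {h : PMP G Z ρ} {q : X → Y} {r : Y → Z}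
    (hr : IsFactorMap g h r) (hq : IsFactorMap f g q) : IsFactorMap f h (r ∘ q) where
  measurePreserving := hr.measurePreserving.comp hq.measurePreserving
  ae_equivariant γ := by
    filter_upwards [hq.ae_equivariant γ,
      hq.measurePreserving.quasiMeasurePreserving.ae (hr.ae_equivariant γ)] with x hqx hrx
    rw [Function.comp_apply, hqx, hrx, Function.comp_apply]

namespace MeasureIso

variable (Φ : MeasureIso μ ν)

theorem isFactorMap_invFun {f : PMP G X μ} {g : PMP G Y ν} (hΦ : IsFactorMap f g Φ.toFun) :
    IsFactorMap g f Φ.invFun where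
  measurePreserving := Φ.measurePreserving_invFun
  ae_equivariant γ := by
    have hinv := Φ.measurePreserving_invFun.quasiMeasurePreserving
    filter_upwards [Φ.ae_right_inv, hinv.ae (hΦ.ae_equivariant γ),
      hinv.ae ((f.preserves γ).quasiMeasurePreserving.ae Φ.ae_left_inv)] with y hy heq hleft
    rw [hy] at heq
    rw [← heq, hleft]

/-- The conjugate of `g.act γ` by `Φ`, an action of `G` up to null sets. -/
def conj (g : PMP G Y ν) (γ : G) (x : X) : X :=
  Φ.invFun (g.act γ (Φ.toFun x))

theorem measurePreserving_conj (g : PMP G Y ν) (γ : G) : MeasurePreserving (Φ.conj g γ) μ μ :=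
  Φ.measurePreserving_invFun.comp ((g.preserves γ).comp Φ.measurePreserving_toFun)

/-- The points on which `Φ.conj g` literally satisfies the laws of an action. -/
def regularSet (g : PMP G Y ν) : Set X :=
  {x | Φ.invFun (Φ.toFun x) = x ∧ ∀ γ, Φ.toFun (Φ.conj g γ x) = g.act γ (Φ.toFun x)}

theorem ae_mem_regularSet [Countable G] (g : PMP G Y ν) : ∀ᵐ x ∂μ, x ∈ Φ.regularSet g := by
  refine Φ.ae_left_inv.and (ae_all_iff.2 fun γ => ?_)
  exact Φ.measurePreserving_toFun.quasiMeasurePreserving.ae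
    ((g.preserves γ).quasiMeasurePreserving.ae Φ.ae_right_inv)

theorem measurableSet_regularSet [Countable G] [MeasurableEq X] [MeasurableEq Y]
    (g : PMP G Y ν) : MeasurableSet (Φ.regularSet g) := by
  have hΦ := Φ.measurePreserving_toFun.measurable
  have hΦ' := Φ.measurePreserving_invFun.measurable
  simp only [regularSet, ofPred_and, ofPred_forall]
  exact (measurableSet_eq_fun (hΦ'.comp hΦ) measurable_id).inter <| .iInter fun γ =>
    measurableSet_eq_fun (hΦ.comp (Φ.measurePreserving_conj g γ).measurable)
      ((g.measurable γ).comp hΦ)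

section Conj

variable {Φ} {g : PMP G Y ν} {x : X}

theorem conj_one (hx : x ∈ Φ.regularSet g) : Φ.conj g 1 x = x := by
  rw [conj, g.act_one, hx.1]

theorem conj_mul (hx : x ∈ Φ.regularSet g) (γ₁ γ₂ : G) :
    Φ.conj g (γ₁ * γ₂) x = Φ.conj g γ₁ (Φ.conj g γ₂ x) := by
  rw [conj, conj, hx.2, g.act_mul]

theorem conj_mem_regularSet (hx : x ∈ Φ.regularSet g) (γ : G) : Φ.conj g γ x ∈ Φ.regularSet g := by
  refine ⟨by rw [hx.2, conj], fun γ' => ?_⟩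
  rw [← conj_mul hx, hx.2, hx.2, g.act_mul]

end Conj

variable [Countable G] [MeasurableEq X] [MeasurableEq Y]

open Classical in
/-- The action `g` transported along `Φ`, extended by the identity off the regular set so that the
action laws hold at every point. -/
noncomputable def pullback (g : PMP G Y ν) : PMP G X μ where
  act γ := (Φ.regularSet g).piecewise (Φ.conj g γ) id
  measurable γ := (Φ.measurePreserving_conj g γ).measurable.piecewise
    (Φ.measurableSet_regularSet g) measurable_id
  preserves γ := by
    refine (Φ.measurePreserving_conj g γ).congr ((Φ.measurePreserving_conj g γ).measurable.piecewise
      (Φ.measurableSet_regularSet g) measurable_id) ?_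
    filter_upwards [Φ.ae_mem_regularSet g] with x hx
    exact (piecewise_eq_of_mem (Φ.regularSet g) (Φ.conj g γ) id hx).symm
  act_one x := by
    by_cases hx : x ∈ Φ.regularSet g
    · rw [piecewise_eq_of_mem _ _ _ hx, conj_one hx]
    · exact piecewise_eq_of_notMem _ _ _ hx
  act_mul γ₁ γ₂ x := by
    by_cases hx : x ∈ Φ.regularSet g
    · rw [piecewise_eq_of_mem _ _ _ hx, piecewise_eq_of_mem _ _ _ hx,
        piecewise_eq_of_mem _ _ _ (conj_mem_regularSet hx γ₂), conj_mul hx]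
    · have hfix : ∀ γ, (Φ.regularSet g).piecewise (Φ.conj g γ) id x = x :=
        fun γ => piecewise_eq_of_notMem _ _ _ hx
      rw [hfix, hfix, hfix]

open Classical in
theorem isFactorMap_pullback (g : PMP G Y ν) : IsFactorMap (Φ.pullback g) g Φ.toFun where
  measurePreserving := Φ.measurePreserving_toFun
  ae_equivariant γ := by
    filter_upwards [Φ.ae_mem_regularSet g] with x hx
    rw [← hx.2]
    exact congrArg Φ.toFun (piecewise_eq_of_mem (Φ.regularSet g) (Φ.conj g γ) id hx)

end MeasureIso

end FactorMaps

section FiniteLabellings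

theorem abs_measureReal_preimage_sub_le {X β : Type*} [MeasurableSpace X] {μ : Measure X}
    [IsFiniteMeasure μ] (S T : X → β) (U : Set β) :
    |μ.real (S ⁻¹' U) - μ.real (T ⁻¹' U)| ≤ μ.real {x | S x ≠ T x} := by
  have key : ∀ S T : X → β, μ.real (S ⁻¹' U) ≤ μ.real (T ⁻¹' U) + μ.real {x | S x ≠ T x} := by
    refine fun S T => (measureReal_mono fun x hx => ?_).trans (measureReal_union_le _ _)
    by_cases hxT : S x = T x
    · exact Or.inl (hxT ▸ hx : T x ∈ U)
    · exact Or.inr hxT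
  have hST := key S T
  have hTS := key T S
  simp only [ne_comm (a := T _)] at hTS
  exact abs_sub_le_iff.2 ⟨by linarith, by linarith⟩

theorem abs_measureReal_preimage_sub_le_of_singleton {X Y β : Type*} [MeasurableSpace X]
    [MeasurableSpace Y] [Fintype β] [MeasurableSpace β] [MeasurableSingletonClass β]
    {μ : Measure X} {ν : Measure Y} [IsFiniteMeasure μ] [IsFiniteMeasure ν] {S : X → β}
    {T : Y → β} (hS : Measurable S) (hT : Measurable T) {ε : ℝ}
    (h : ∀ b, |μ.real (S ⁻¹' {b}) - ν.real (T ⁻¹' {b})| ≤ ε) (U : Set β) :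
    |μ.real (S ⁻¹' U) - ν.real (T ⁻¹' U)| ≤ Fintype.card β * ε := by
  classical
  have hε (b : β) : 0 ≤ ε := (abs_nonneg _).trans (h b)
  rw [← U.coe_toFinset,
    ← sum_measureReal_preimage_singleton _ fun b _ => hS (measurableSet_singleton b),
    ← sum_measureReal_preimage_singleton _ fun b _ => hT (measurableSet_singleton b),
    ← Finset.sum_sub_distrib]
  calc _ ≤ ∑ b ∈ U.toFinset, |μ.real (S ⁻¹' {b}) - ν.real (T ⁻¹' {b})| :=
        Finset.abs_sum_le_sum_abs _ _
    _ ≤ ∑ _b : β, ε := (Finset.sum_le_sum fun b _ => h b).trans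
        (Finset.sum_le_sum_of_subset_of_nonneg (Finset.subset_univ _) fun b _ _ => hε b)
    _ = Fintype.card β * ε := by rw [Finset.sum_const, nsmul_eq_mul, Finset.card_univ]

end FiniteLabellings

section WeakContainment

variable {G X Y Z α : Type*} [Group G] [MeasurableSpace X] [MeasurableSpace Y] [MeasurableSpace Z]
  {μ : Measure X} {ν : Measure Y} {ρ : Measure Z}

/-- The labels of a point and of its translate by `γ`. -/
def PMP.jointLabel (f : PMP G X μ) (D : X → α) (γ : G) (x : X) : α × α :=
  (D x, D (f.act γ x))

theorem PMP.measurable_jointLabel [MeasurableSpace α] (f : PMP G X μ) {D : X → α}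
    (hD : Measurable D) (γ : G) : Measurable (f.jointLabel D γ) :=
  hD.prodMk (hD.comp (f.measurable γ))

theorem PMP.measure_image_inter (f : PMP G X μ) {n : ℕ} {D : X → Fin n} (hD : Measurable D) (γ : G)
    (i j : Fin n) : (μ (f.act γ '' (D ⁻¹' {i}) ∩ D ⁻¹' {j})).toReal =
      μ.real (f.jointLabel D γ ⁻¹' {(i, j)}) := by
  have himage : f.act γ '' (D ⁻¹' {i}) = f.act γ⁻¹ ⁻¹' (D ⁻¹' {i}) :=
    congrFun (image_eq_preimage_of_inverse (f.act_inv_act γ) (f.act_act_inv γ)) _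
  have hmeas : MeasurableSet (f.act γ '' (D ⁻¹' {i}) ∩ D ⁻¹' {j}) := by
    rw [himage]
    exact (f.measurable γ⁻¹ (hD (measurableSet_singleton i))).inter (hD (measurableSet_singleton j))
  rw [← Measure.real, ← (f.preserves γ).measureReal_preimage hmeas.nullMeasurableSet,
    preimage_inter, himage, ← preimage_comp]
  congr 1
  ext x
  simp [PMP.jointLabel, f.act_inv_act]

theorem weaklyContains_iff {f : PMP G X μ} {g : PMP G Y ν} :
    WeaklyContains f g ↔ ∀ n : ℕ, 1 ≤ n → ∀ C : Y → Fin n, Measurable C → ∀ F : Finset G,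
      ∀ ε : ℝ, 0 < ε → ∃ D : X → Fin n, Measurable D ∧ ∀ γ ∈ F, ∀ p,
        |μ.real (f.jointLabel D γ ⁻¹' {p}) - ν.real (g.jointLabel C γ ⁻¹' {p})| ≤ ε := by
  refine forall_congr' fun n => forall_congr' fun _ => forall_congr' fun C => forall_congr'
    fun hC => forall_congr' fun F => forall_congr' fun ε => forall_congr' fun _ =>
      exists_congr fun D => and_congr_right fun hD => ?_
  simp only [f.measure_image_inter hD, g.measure_image_inter hC, Prod.forall]
  exact ⟨fun H γ hγ i j => H i j γ hγ, fun H i j γ hγ => H γ hγ i j⟩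

theorem WeaklyContains.trans {f : PMP G X μ} {g : PMP G Y ν} {h : PMP G Z ρ}
    (hfg : WeaklyContains f g) (hgh : WeaklyContains g h) : WeaklyContains f h := by
  intro n hn C hC F ε hε
  obtain ⟨D, hD, hDC⟩ := hgh n hn C hC F (ε / 2) (half_pos hε)
  obtain ⟨E, hE, hED⟩ := hfg n hn D hD F (ε / 2) (half_pos hε)
  refine ⟨E, hE, fun i j γ hγ => ?_⟩
  calc _ ≤ _ + _ := abs_sub_le _ (ν (g.act γ '' (D ⁻¹' {i}) ∩ D ⁻¹' {j})).toReal _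
    _ ≤ ε / 2 + ε / 2 := add_le_add (hED i j γ hγ) (hDC i j γ hγ)
    _ = ε := add_halves ε

theorem IsFactorMap.weaklyContains {f : PMP G X μ} {g : PMP G Y ν} {q : X → Y}
    (hq : IsFactorMap f g q) : WeaklyContains f g := by
  refine weaklyContains_iff.2 fun n _ C hC F ε hε =>
    ⟨C ∘ q, hC.comp hq.measurePreserving.measurable, fun γ _ p => ?_⟩
  have hcongr : f.jointLabel (C ∘ q) γ ⁻¹' {p} =ᵐ[μ] q ⁻¹' (g.jointLabel C γ ⁻¹' {p}) := by
    filter_upwards [hq.ae_equivariant γ] with x hx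
    refine congrArg (· = p) (Prod.ext rfl (congrArg C hx))
  rw [measureReal_congr hcongr, hq.measurePreserving.measureReal_preimage
    (g.measurable_jointLabel hC γ (measurableSet_singleton p)).nullMeasurableSet, sub_self,
    abs_zero]
  exact hε.le

theorem WeaklyContains.exists_labelling [Finite α] [Nonempty α] [MeasurableSpace α]
    [DiscreteMeasurableSpace α] [IsFiniteMeasure μ] [IsFiniteMeasure ν] {f : PMP G X μ}
    {g : PMP G Y ν} (hfg : WeaklyContains f g) {C : Y → α} (hC : Measurable C) (F : Finset G)
    {ε : ℝ} (hε : 0 < ε) : ∃ D : X → α, Measurable D ∧ ∀ γ ∈ F, ∀ R : Set (α × α),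
      |μ.real (f.jointLabel D γ ⁻¹' R) - ν.real (g.jointLabel C γ ⁻¹' R)| ≤ ε := by
  obtain ⟨n, ⟨e⟩⟩ := Finite.exists_equiv_fin α
  have hn : 1 ≤ n := Fin.pos (e (Classical.arbitrary α))
  have hcard : (0 : ℝ) < Fintype.card (Fin n × Fin n) := by
    have : Nonempty (Fin n × Fin n) := ⟨(⟨0, hn⟩, ⟨0, hn⟩)⟩
    exact_mod_cast Fintype.card_pos
  have heC : Measurable (e ∘ C) := (measurable_of_countable e).comp hC
  obtain ⟨D, hD, happrox⟩ :=
    weaklyContains_iff.1 hfg n hn (e ∘ C) heC F (ε / Fintype.card (Fin n × Fin n)) (by positivity)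
  refine ⟨e.symm ∘ D, (measurable_of_countable e.symm).comp hD, fun γ hγ R => ?_⟩
  have hsum := abs_measureReal_preimage_sub_le_of_singleton (f.measurable_jointLabel hD γ)
    (g.measurable_jointLabel heC γ) (happrox γ hγ) (Prod.map e.symm e.symm ⁻¹' R)
  have hlabel : Prod.map e.symm e.symm ∘ g.jointLabel (e ∘ C) γ = g.jointLabel C γ := by
    ext y <;> simp [PMP.jointLabel]
  rwa [mul_div_cancel₀ _ hcard.ne', ← preimage_comp, ← preimage_comp, hlabel] at hsum

end WeakContainment

section Patterns

variable {G X Y α : Type*} [Group G] [MeasurableSpace X] [MeasurableSpace Y] [MeasurableSpace α]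
  {μ : Measure X} {ν : Measure Y}

/-- The labels read along the orbit of `x`. -/
def PMP.pattern (f : PMP G X μ) (D : X → α) (x : X) (γ : G) : α :=
  D (f.act γ x)

theorem PMP.measurable_pattern (f : PMP G X μ) {D : X → α} (hD : Measurable D) :
    Measurable (f.pattern D) :=
  measurable_pi_lambda _ fun γ => hD.comp (f.measurable γ)

theorem PMP.measureReal_restrict_pattern_ne_le_sum {G X α : Type*} [Group G] [MeasurableSpace X]
    {μ : Measure X} [IsFiniteMeasure μ] (f : PMP G X μ) (F : Finset G) (D : X → α)
    (P : X → F → α) :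
    μ.real {x | F.restrict (f.pattern D x) ≠ P x} ≤
      ∑ γ : F, μ.real {x | D (f.act γ x) ≠ P x γ} := by
  have hunion : {x | F.restrict (f.pattern D x) ≠ P x} =
      ⋃ γ : F, {x | D (f.act γ x) ≠ P x γ} := by
    ext x
    simp only [mem_iUnion, mem_ofPred_eq, ne_eq, funext_iff, not_forall]
    rfl
  exact hunion ▸ measureReal_iUnion_fintype_le _

/-- Label `x` by an approximation `D' x` of a whole pattern on `insert 1 F`. The letter of `D' x` at
`γ` agrees with the letter of `D' (γ x)` at `1` outside a small set, since in `h` the two letters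
always agree. -/
theorem WeaklyContains.exists_pattern [Finite α] [Nonempty α] [DiscreteMeasurableSpace α]
    [IsFiniteMeasure μ] [IsFiniteMeasure ν] {f : PMP G X μ} {h : PMP G Y ν}
    (hfh : WeaklyContains f h) {C : Y → α} (hC : Measurable C) (F : Finset G) {ε : ℝ}
    (hε : 0 < ε) : ∃ D : X → α, Measurable D ∧ ∀ U : Set (F → α),
      |μ.real ((fun x => F.restrict (f.pattern D x)) ⁻¹' U) -
        ν.real ((fun y => F.restrict (h.pattern C y)) ⁻¹' U)| ≤ ε := by
  classical
  obtain ⟨D', hD', happrox⟩ := hfh.exists_labelling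
    (C := fun y => (insert 1 F).restrict (h.pattern C y))
    ((Finset.measurable_restrict _).comp (h.measurable_pattern hC)) (insert 1 F)
    (ε := ε / (F.card + 1)) (by positivity)
  let one : ↥(insert 1 F) := ⟨1, Finset.mem_insert_self 1 F⟩
  let incl (γ : F) : ↥(insert 1 F) := ⟨γ, Finset.mem_insert_of_mem γ.2⟩
  have hlaw (U : Set (F → α)) : |μ.real ((fun x => D' x ∘ incl) ⁻¹' U) -
      ν.real ((fun y => F.restrict (h.pattern C y)) ⁻¹' U)| ≤ ε / (F.card + 1) :=
    happrox 1 one.2 {p | p.1 ∘ incl ∈ U}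
  have hbad (γ : F) : μ.real {x | D' (f.act γ x) one ≠ D' x (incl γ)} ≤ ε / (F.card + 1) := by
    have hγ := happrox γ (incl γ).2 {p | p.2 one ≠ p.1 (incl γ)}
    have hconsistent : h.jointLabel (fun y => (insert 1 F).restrict (h.pattern C y)) γ ⁻¹'
        {p | p.2 one ≠ p.1 (incl γ)} = ∅ :=
      eq_empty_of_forall_notMem fun y hy => hy (congrArg C (h.act_one _))
    rw [hconsistent, measureReal_empty, sub_zero] at hγ
    exact (le_abs_self _).trans hγ
  have hne : μ.real {x | F.restrict (f.pattern (fun x => D' x one) x) ≠ D' x ∘ incl} ≤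
      F.card * (ε / (F.card + 1)) :=
    calc _ ≤ ∑ γ : F, μ.real {x | D' (f.act γ x) one ≠ D' x (incl γ)} :=
          f.measureReal_restrict_pattern_ne_le_sum _ _ _
      _ ≤ ∑ _γ : F, ε / (F.card + 1) := Finset.sum_le_sum fun γ _ => hbad γ
      _ = _ := by rw [Finset.sum_const, nsmul_eq_mul, Finset.card_univ, Fintype.card_coe]
  refine ⟨fun x => D' x one, (measurable_pi_apply one).comp hD', fun U => ?_⟩
  calc _ ≤ _ + _ := abs_sub_le _ (μ.real ((fun x => D' x ∘ incl) ⁻¹' U)) _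
    _ ≤ F.card * (ε / (F.card + 1)) + ε / (F.card + 1) :=
        add_le_add ((abs_measureReal_preimage_sub_le _ _ U).trans hne) (hlaw U)
    _ = ε := by field_simp

end Patterns

section ClopenApproximation

variable {K α : Type*} [TopologicalSpace K] [CompactSpace K] [T2Space K]
  [TotallyDisconnectedSpace K] [SecondCountableTopology K] [MeasurableSpace K] [BorelSpace K]
  (ν : Measure K) [IsFiniteMeasure ν]

theorem exists_isClopen_measureReal_symmDiff_lt {s : Set K} (hs : MeasurableSet s) {ε : ℝ}
    (hε : 0 < ε) : ∃ t, IsClopen t ∧ ν.real (symmDiff s t) < ε := by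
  have halg : IsSetAlgebra {t : Set K | IsClopen t} :=
    ⟨isClopen_empty, fun _ ht => ht.compl, fun _ _ ht ht' => ht.union ht'⟩
  have hgen : ‹MeasurableSpace K› = MeasurableSpace.generateFrom {t : Set K | IsClopen t} := by
    rw [BorelSpace.measurable_eq (α := K), isTopologicalBasis_isClopen.borel_eq_generateFrom]
  obtain ⟨t, ht, hst⟩ := (Measure.MeasureDense.of_generateFrom_isSetAlgebra_finite ν halg
    hgen).approx s hs (measure_ne_top _ _) ε hε
  exact ⟨t, ht, (ENNReal.lt_ofReal_iff_toReal_lt (measure_ne_top _ _)).1 hst⟩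

theorem exists_continuous_measureReal_ne_le [Finite α] [Nonempty α] [TopologicalSpace α]
    [MeasurableSpace α] [MeasurableSingletonClass α] {C : K → α} (hC : Measurable C)
    {ε : ℝ} (hε : 0 < ε) : ∃ C' : K → α, Continuous C' ∧ ν.real {k | C k ≠ C' k} ≤ ε := by
  classical
  have := Fintype.ofFinite α
  have hcard : (0 : ℝ) < Fintype.card α := Nat.cast_pos.2 Fintype.card_pos
  choose t ht hCt using fun a : α => exists_isClopen_measureReal_symmDiff_lt ν
    (hC (measurableSet_singleton a)) (div_pos hε hcard)
  let indicators (k : K) (a : α) : Bool := (t a).boolIndicator k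
  have hcont : Continuous indicators :=
    continuous_pi fun a => (continuous_boolIndicator_iff_isClopen (t a)).2 (ht a)
  let oneHot (a b : α) : Bool := decide (a = b)
  have hinj : Function.Injective oneHot := fun a b hab => by
    simpa [oneHot] using congrFun hab b
  refine ⟨Function.invFun oneHot ∘ indicators, continuous_of_discreteTopology.comp hcont, ?_⟩
  have hsub : {k | C k ≠ (Function.invFun oneHot ∘ indicators) k} ⊆
      ⋃ a, symmDiff (C ⁻¹' {a}) (t a) := by
    intro k hk
    by_contra hgood
    refine hk ?_
    have hind : indicators k = oneHot (C k) := by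
      ext a
      have := mt (mem_iUnion_of_mem a) hgood
      simp only [mem_symmDiff, mem_preimage, mem_singleton_iff] at this
      by_cases hka : k ∈ t a <;> simp_all [indicators, oneHot, Set.boolIndicator]
    rw [Function.comp_apply, hind, Function.leftInverse_invFun hinj]
  calc _ ≤ ∑ a, ν.real (symmDiff (C ⁻¹' {a}) (t a)) :=
        (measureReal_mono hsub).trans (measureReal_iUnion_fintype_le _)
    _ ≤ ∑ _a : α, ε / Fintype.card α := Finset.sum_le_sum fun a _ => (hCt a).le
    _ = ε := by
      rw [Finset.sum_const, nsmul_eq_mul, Finset.card_univ, mul_div_cancel₀ _ hcard.ne']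

end ClopenApproximation

theorem PMP.abs_measureReal_jointLabel_preimage_sub_le {G X α : Type*} [Group G]
    [MeasurableSpace X] {μ : Measure X} [IsFiniteMeasure μ] [MeasurableSpace α] [MeasurableEq α]
    (f : PMP G X μ) {C C' : X → α} (hC : Measurable C) (hC' : Measurable C') (γ : G)
    (R : Set (α × α)) :
    |μ.real (f.jointLabel C γ ⁻¹' R) - μ.real (f.jointLabel C' γ ⁻¹' R)| ≤
      2 * μ.real {x | C x ≠ C' x} := by
  have htranslate : μ.real (f.act γ ⁻¹' {x | C x ≠ C' x}) = μ.real {x | C x ≠ C' x} :=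
    (f.preserves γ).measureReal_preimage (measurableSet_eq_fun hC hC').compl.nullMeasurableSet
  have hsub : {x | f.jointLabel C γ x ≠ f.jointLabel C' γ x} ⊆
      {x | C x ≠ C' x} ∪ f.act γ ⁻¹' {x | C x ≠ C' x} := by
    intro x hx
    by_contra hgood
    simp only [mem_union, mem_preimage, mem_ofPred_eq, not_or, not_not] at hgood
    exact hx (Prod.ext hgood.1 hgood.2)
  calc _ ≤ μ.real {x | f.jointLabel C γ x ≠ f.jointLabel C' γ x} :=
        abs_measureReal_preimage_sub_le _ _ R
    _ ≤ μ.real {x | C x ≠ C' x} + μ.real (f.act γ ⁻¹' {x | C x ≠ C' x}) :=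
        (measureReal_mono hsub).trans (measureReal_union_le _ _)
    _ = 2 * μ.real {x | C x ≠ C' x} := by rw [htranslate, two_mul]

/-- The action by scalar multiplication, for an invariant measure. -/
def PMP.ofSMul (G : Type*) [Group G] {K : Type*} [MeasurableSpace K] [MulAction G K]
    [MeasurableConstSMul G K] (ν : Measure K) [SMulInvariantMeasure G K ν] : PMP G K ν where
  act γ k := γ • k
  measurable := measurable_const_smul
  preserves γ := measurePreserving_smul γ ν
  act_one := one_smul G
  act_mul := mul_smul

section LimitsInDistribution

variable {ι G X K : Type*} {l : Filter ι} [MeasurableSpace X] {μ : Measure X}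
  [IsProbabilityMeasure μ] [TopologicalSpace K] [HasOuterApproxClosed K] [MeasurableSpace K]
  [BorelSpace K] {ν : Measure K} [IsProbabilityMeasure ν] {Ψ : ι → X → K}

theorem tendsto_measureReal_preimage_of_isClopen
    (hlim : TendstoInDistribution Ψ l id (fun _ => μ) ν) {E : Set K} (hE : IsClopen E) :
    Tendsto (fun i => μ.real (Ψ i ⁻¹' E)) l (𝓝 (ν.real E)) := by
  have hclopen := (continuous_subtype_val.tendsto _).comp
    (ProbabilityMeasure.tendsto_measure_of_isClopen_of_tendsto hlim.tendsto hE)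
  convert hclopen using 2 with i
  · exact (map_measureReal_apply_of_aemeasurable (hlim.forall_aemeasurable i)
      hE.isOpen.measurableSet).symm
  · simp [Measure.real, ENNReal.coe_toNNReal_eq_toReal]

variable [l.NeBot]

theorem measure_singleton_le_of_tendsto [RegularSpace K] [ν.OuterRegular]
    (hlim : TendstoInDistribution Ψ l id (fun _ => μ) ν) {x : X} {k : K}
    (hx : Tendsto (fun i => Ψ i x) l (𝓝 k)) : μ {x} ≤ ν {k} := by
  rw [measure_eq_iInf_isOpen {k} ν]
  refine le_iInf₂ fun U hkU => le_iInf fun hU => ?_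
  obtain ⟨V, hV, hVclosed, hVU⟩ := exists_mem_nhds_isClosed_subset (hU.mem_nhds (hkU rfl))
  have hlimsup : limsup (fun i => μ.map (Ψ i) V) l ≤ ν.map id V :=
    FiniteMeasure.limsup_measure_closed_le_of_tendsto
      ((ProbabilityMeasure.tendsto_nhds_iff_toFiniteMeasure_tendsto_nhds l).1 hlim.tendsto) hVclosed
  rw [Measure.map_id] at hlimsup
  refine le_trans ?_ (hlimsup.trans (measure_mono hVU))
  refine le_limsup_of_frequently_le (Eventually.frequently ?_)
  filter_upwards [hx hV] with i hi
  rw [Measure.map_apply_of_aemeasurable (hlim.forall_aemeasurable i) hVclosed.measurableSet]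
  exact measure_mono (singleton_subset_iff.2 hi)

variable [Group G] [MulAction G K] [ContinuousConstSMul G K] {f : PMP G X μ}

theorem smulInvariantMeasure_of_tendstoInDistribution (hΨ : ∀ i, Measurable (Ψ i))
    (hequiv : ∀ i γ, Function.Semiconj (Ψ i) (f.act γ) (γ • ·))
    (hlim : TendstoInDistribution Ψ l id (fun _ => μ) ν) : SMulInvariantMeasure G K ν := by
  have hlaw (γ : G) (i : ι) : μ.map ((γ • ·) ∘ Ψ i) = μ.map (Ψ i) := by
    rw [← (hequiv i γ).comp_eq, ← Measure.map_map (hΨ i) (f.measurable γ), (f.preserves γ).map_eq]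
  refine ⟨fun γ E hE => ?_⟩
  have htranslate := hlim.continuous_comp (continuous_const_smul γ)
  have hsame : TendstoInDistribution (fun i => (γ • ·) ∘ Ψ i) l id (fun _ => μ) ν :=
    { forall_aemeasurable := htranslate.forall_aemeasurable
      tendsto := by simpa only [hlaw] using hlim.tendsto }
  have hmap := tendstoInDistribution_unique _ htranslate hsame
  rw [Function.comp_id, Measure.map_id] at hmap
  rw [← Measure.map_apply (measurable_const_smul γ) hE, hmap]

/-- Up to a small error a labelling of `K` is continuous, and then its joint labels are read off
clopen sets, so that its pullbacks along `Ψ i` have almost the same statistics. -/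
theorem weaklyContains_ofSMul_of_tendstoInDistribution [CompactSpace K] [T2Space K]
    [TotallyDisconnectedSpace K] [SecondCountableTopology K] [SMulInvariantMeasure G K ν]
    (hΨ : ∀ i, Measurable (Ψ i)) (hequiv : ∀ i γ, Function.Semiconj (Ψ i) (f.act γ) (γ • ·))
    (hlim : TendstoInDistribution Ψ l id (fun _ => μ) ν) :
    WeaklyContains f (PMP.ofSMul G ν) := by
  refine weaklyContains_iff.2 fun n hn C hC F ε hε => ?_
  have : Nonempty (Fin n) := ⟨⟨0, hn⟩⟩
  obtain ⟨C', hC', hCC'⟩ :=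
    exists_continuous_measureReal_ne_le ν hC (show 0 < ε / 4 by positivity)
  have hclopen (γ : G) (p : Fin n × Fin n) :
      IsClopen ((PMP.ofSMul G ν).jointLabel C' γ ⁻¹' {p}) :=
    (isClopen_discrete {p}).preimage (hC'.prodMk (hC'.comp (continuous_const_smul γ)))
  have hlabel (i : ι) (γ : G) :
      f.jointLabel (C' ∘ Ψ i) γ = (PMP.ofSMul G ν).jointLabel C' γ ∘ Ψ i :=
    funext fun x => Prod.ext rfl (congrArg C' (hequiv i γ x))
  have hnear : ∀ᶠ i in l, ∀ γ ∈ F, ∀ p, |μ.real (f.jointLabel (C' ∘ Ψ i) γ ⁻¹' {p}) -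
      ν.real ((PMP.ofSMul G ν).jointLabel C' γ ⁻¹' {p})| < ε / 2 := by
    refine (eventually_all_finset F).2 fun γ _ => eventually_all.2 fun p => ?_
    simp only [hlabel, preimage_comp, ← Real.dist_eq]
    exact Metric.tendsto_nhds.1 (tendsto_measureReal_preimage_of_isClopen hlim (hclopen γ p)) _
      (half_pos hε)
  obtain ⟨i, hi⟩ := hnear.exists
  refine ⟨C' ∘ Ψ i, hC'.measurable.comp (hΨ i), fun γ hγ p => ?_⟩
  have hperturb :=
    (PMP.ofSMul G ν).abs_measureReal_jointLabel_preimage_sub_le hC'.measurable hC γ {p}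
  simp only [ne_comm (a := C' _)] at hperturb
  calc _ ≤ _ + _ := abs_sub_le _ (ν.real ((PMP.ofSMul G ν).jointLabel C' γ ⁻¹' {p})) _
    _ ≤ ε / 2 + 2 * (ε / 4) := by gcongr; exacts [(hi γ hγ p).le, hperturb.trans (by gcongr)]
    _ = ε := by ring

end LimitsInDistribution

section ExistenceOfLimits

variable {ι X Y K : Type*} [MeasurableSpace X] [MeasurableSpace Y] {μ : Measure X} {ν : Measure Y}
  [IsProbabilityMeasure μ] [IsProbabilityMeasure ν]

theorem exists_tendstoInDistribution [TopologicalSpace K] [CompactSpace K] [T2Space K]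
    [MeasurableSpace K] [BorelSpace K] {Ψ : ι → X → K} (hΨ : ∀ i, Measurable (Ψ i))
    (𝒰 : Ultrafilter ι) : ∃ (ρ : Measure K) (_ : IsProbabilityMeasure ρ),
      TendstoInDistribution Ψ 𝒰 id (fun _ => μ) ρ := by
  let law (i : ι) : ProbabilityMeasure K :=
    ⟨μ.map (Ψ i), Measure.isProbabilityMeasure_map (hΨ i).aemeasurable⟩
  obtain ⟨ρ, -, hρ⟩ := isCompact_univ.ultrafilter_le_nhds (𝒰.map law) (by simp)
  exact ⟨ρ, inferInstance, fun i => (hΨ i).aemeasurable, aemeasurable_id, by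
    simp only [Measure.map_id]
    exact hρ⟩

theorem tendstoInDistribution_pi {κ : Type*} [Countable κ] {β : κ → Type*}
    [∀ j, TopologicalSpace (β j)] [∀ j, SecondCountableTopology (β j)]
    [∀ j, MeasurableSpace (β j)] [∀ j, BorelSpace (β j)] {l : Filter ι} [l.IsCountablyGenerated]
    {Ψ : ι → X → ∀ j, β j} (hΨ : ∀ i, Measurable (Ψ i)) {T : Y → ∀ j, β j} (hT : Measurable T)
    (h : ∀ J : Finset κ, ∀ U : Set (∀ j : J, β j), MeasurableSet U →
      Tendsto (fun i => μ.real ((fun x => J.restrict (Ψ i x)) ⁻¹' U)) l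
        (𝓝 (ν.real ((fun y => J.restrict (T y)) ⁻¹' U)))) :
    TendstoInDistribution Ψ l T (fun _ => μ) ν where
  forall_aemeasurable i := (hΨ i).aemeasurable
  aemeasurable_limit := hT.aemeasurable
  tendsto := by
    refine isPiSystem_measurableCylinders.tendsto_probabilityMeasure_of_tendsto_of_mem
      (fun _ hs => MeasurableSet.of_mem_measurableCylinders hs) (fun u hu z hz => ?_) fun s hs => ?_
    · obtain ⟨_, ⟨U, J, hU, rfl⟩, hzU, hUu⟩ := (isTopologicalBasis_pi fun j =>
        TopologicalSpace.isTopologicalBasis_opens (α := β j)).exists_subset_of_mem_open hz hu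
      refine ⟨_, (mem_measurableCylinders _).2 ⟨J, univ.pi fun j => U j, ?_, ?_⟩,
        (isOpen_set_pi J.finite_toSet hU).mem_nhds hzU, hUu⟩
      · exact .univ_pi fun j => IsOpen.measurableSet (hU j j.2)
      · ext; simp
    · obtain ⟨J, U, hU, rfl⟩ := (mem_measurableCylinders _).1 hs
      have hcyl := MeasurableSet.cylinder J hU
      refine NNReal.tendsto_coe.1 ?_
      convert h J U hU with i
      · exact map_measureReal_apply (hΨ i) hcyl
      · exact map_measureReal_apply hT hcyl

end ExistenceOfLimits

/-- The space of `(ℕ → Bool)`-valued labellings of `G`, flattened to a Cantor space so that finite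
sets of coordinates describe cylinders. -/
def ShiftSpace (G : Type*) : Type _ := G × ℕ → Bool

namespace ShiftSpace

variable {G : Type*}

instance : TopologicalSpace (ShiftSpace G) := inferInstanceAs (TopologicalSpace (G × ℕ → Bool))

instance : CompactSpace (ShiftSpace G) := inferInstanceAs (CompactSpace (G × ℕ → Bool))

instance : T2Space (ShiftSpace G) := inferInstanceAs (T2Space (G × ℕ → Bool))

instance : TotallyDisconnectedSpace (ShiftSpace G) :=
  inferInstanceAs (TotallyDisconnectedSpace (G × ℕ → Bool))

instance : MeasurableSpace (ShiftSpace G) := inferInstanceAs (MeasurableSpace (G × ℕ → Bool))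

instance [Countable G] : SecondCountableTopology (ShiftSpace G) :=
  inferInstanceAs (SecondCountableTopology (G × ℕ → Bool))

instance [Countable G] : StandardBorelSpace (ShiftSpace G) :=
  inferInstanceAs (StandardBorelSpace (G × ℕ → Bool))

instance [Countable G] : BorelSpace (ShiftSpace G) := inferInstanceAs (BorelSpace (G × ℕ → Bool))

variable [Group G]

instance : MulAction G (ShiftSpace G) where
  smul γ k p := k (p.1 * γ, p.2)
  one_smul k := funext fun p => congrArg k (Prod.ext (mul_one p.1) rfl)
  mul_smul γ₁ γ₂ k := funext fun p => congrArg k (Prod.ext (mul_assoc p.1 γ₁ γ₂).symm rfl)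

instance : ContinuousConstSMul G (ShiftSpace G) where
  continuous_const_smul _ := continuous_pi fun _ => continuous_apply _

end ShiftSpace

section Coding

variable {G X Y : Type*} [Group G] [MeasurableSpace X] [MeasurableSpace Y] {μ : Measure X}
  {ν : Measure Y}

/-- The pattern of a labelling by binary sequences, as a point of the shift. -/
def PMP.code (f : PMP G X μ) (D : X → ℕ → Bool) (x : X) : ShiftSpace G :=
  Function.uncurry (f.pattern D x)

theorem PMP.measurable_code (f : PMP G X μ) {D : X → ℕ → Bool} (hD : Measurable D) :
    Measurable (f.code D) :=
  measurable_pi_lambda _ fun p => (measurable_pi_apply p.2).comp (hD.comp (f.measurable p.1))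

theorem PMP.semiconj_code (f : PMP G X μ) (D : X → ℕ → Bool) (γ : G) :
    Function.Semiconj (f.code D) (f.act γ) (γ • ·) :=
  fun x => funext fun p => congrArg (D · p.2) (f.act_mul p.1 γ x).symm

theorem WeaklyContains.exists_code [IsFiniteMeasure μ] [IsFiniteMeasure ν] {f : PMP G X μ}
    {h : PMP G Y ν} (hfh : WeaklyContains f h) {e : Y → ℕ → Bool} (he : Measurable e)
    (J : Finset (G × ℕ)) {ε : ℝ} (hε : 0 < ε) :
    ∃ D : X → ℕ → Bool, Measurable D ∧ ∀ U : Set (J → Bool),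
      |μ.real ((fun x => J.restrict (f.code D x)) ⁻¹' U) -
        ν.real ((fun y => J.restrict (h.code e y)) ⁻¹' U)| ≤ ε := by
  classical
  let coords := J.image Prod.snd
  obtain ⟨D, hD, happrox⟩ := hfh.exists_pattern (C := fun y => coords.restrict (e y))
    ((Finset.measurable_restrict _).comp he) (J.image Prod.fst) hε
  let extend (w : coords → Bool) (n : ℕ) : Bool := if hn : n ∈ coords then w ⟨n, hn⟩ else false
  let read (P : J.image Prod.fst → coords → Bool) (j : J) : Bool :=
    P ⟨j.1.1, Finset.mem_image_of_mem _ j.2⟩ ⟨j.1.2, Finset.mem_image_of_mem _ j.2⟩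
  refine ⟨extend ∘ D, (measurable_of_countable extend).comp hD, fun U => ?_⟩
  have hread : (fun x => J.restrict (f.code (extend ∘ D) x)) =
      fun x => read ((J.image Prod.fst).restrict (f.pattern D x)) :=
    funext fun x => funext fun j => dif_pos (Finset.mem_image_of_mem _ j.2)
  rw [hread]
  exact happrox (read ⁻¹' U)

theorem WeaklyContains.exists_tendstoInDistribution_code [Countable G] [IsProbabilityMeasure μ]
    [IsProbabilityMeasure ν] {f : PMP G X μ} {h : PMP G Y ν} (hfh : WeaklyContains f h)
    {e : Y → ℕ → Bool} (he : Measurable e) :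
    ∃ D : Finset (G × ℕ) → X → ℕ → Bool, (∀ J, Measurable (D J)) ∧
      TendstoInDistribution (fun J => f.code (D J)) atTop (h.code e) (fun _ => μ) ν := by
  choose D hD happrox using fun J : Finset (G × ℕ) =>
    hfh.exists_code he J (ε := 1 / (J.card + 1)) (by positivity)
  refine ⟨D, hD, tendstoInDistribution_pi (fun J => f.measurable_code (hD J))
    (h.measurable_code he) fun J U _ => ?_⟩
  have hzero : Tendsto (fun J : Finset (G × ℕ) => 1 / ((J.card : ℝ) + 1)) atTop (𝓝 0) :=
    tendsto_one_div_add_atTop_nhds_zero_nat.comp tendsto_card_atTop_atTop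
  refine tendsto_iff_norm_sub_tendsto_zero.2
    (squeeze_zero' (.of_forall fun _ => norm_nonneg _) ?_ hzero)
  filter_upwards [eventually_ge_atTop J] with J' hJ
  exact happrox J' (Finset.restrict₂ (π := fun _ => Bool) hJ ⁻¹' U)

end Coding

section Decoding

variable {G X Z : Type*} [Group G] [MeasurableSpace X] [MeasurableSpace Z] {μ : Measure X}
  {ρ : Measure Z}

theorem exists_measurable_leftInverse_nat_bool (X : Type*) [MeasurableSpace X]
    [StandardBorelSpace X] [Nonempty X] : ∃ (e : X → ℕ → Bool) (d : (ℕ → Bool) → X),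
      Measurable e ∧ Measurable d ∧ Function.LeftInverse d e := by
  obtain ⟨e, he, hinj⟩ := MeasurableSpace.measurable_injection_nat_bool_of_countablySeparated X
  obtain ⟨d, hd, hde⟩ := (he.measurableEmbedding hinj).exists_measurable_extend measurable_id
    fun _ => inferInstance
  exact ⟨e, d, he, hd, congrFun hde⟩

/-- The point of `X` encoded by the label at the identity. -/
def ShiftSpace.decode (d : (ℕ → Bool) → X) (k : ShiftSpace G) : X :=
  d fun n => k (1, n)

theorem ShiftSpace.measurable_decode {d : (ℕ → Bool) → X} (hd : Measurable d) :
    Measurable (decode (G := G) d) :=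
  hd.comp (measurable_pi_lambda _ fun n => measurable_pi_apply (1, n))

theorem PMP.leftInverse_decode_code (f : PMP G X μ) {e : X → ℕ → Bool} {d : (ℕ → Bool) → X}
    (hde : Function.LeftInverse d e) : Function.LeftInverse (ShiftSpace.decode d) (f.code e) :=
  fun x => (hde _).trans (f.act_one x)

theorem isFactorMap_decode_comp [Countable G] [MeasurableEq X] {f : PMP G X μ} {a : PMP G Z ρ}
    {e : X → ℕ → Bool} (he : Measurable e) {d : (ℕ → Bool) → X} (hd : Measurable d)
    (hde : Function.LeftInverse d e) {q : Z → ShiftSpace G}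
    (hq : MeasurePreserving q ρ (μ.map (f.code e)))
    (hequiv : ∀ γ, Function.Semiconj q (a.act γ) (γ • ·)) :
    IsFactorMap a f (ShiftSpace.decode d ∘ q) := by
  have hcode := f.measurable_code he
  have hdecode := ShiftSpace.measurable_decode (G := G) hd
  have hinv := f.leftInverse_decode_code hde
  refine ⟨.comp ⟨hdecode, ?_⟩ hq, fun γ => ?_⟩
  · rw [Measure.map_map hdecode hcode, hinv.comp_eq_id, Measure.map_id]
  · have hae : ∀ᵐ k ∂μ.map (f.code e), ShiftSpace.decode d (γ • k) =
        f.act γ (ShiftSpace.decode d k) := by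
      refine (ae_map_iff hcode.aemeasurable (measurableSet_eq_fun
        (hdecode.comp (measurable_const_smul γ)) ((f.measurable γ).comp hdecode))).2 ?_
      refine .of_forall fun x => ?_
      calc ShiftSpace.decode d (γ • f.code e x)
        _ = ShiftSpace.decode d (f.code e (f.act γ x)) := by rw [f.semiconj_code e γ x]
        _ = f.act γ (ShiftSpace.decode d (f.code e x)) := by rw [hinv, hinv]
    filter_upwards [hq.quasiMeasurePreserving.ae hae] with z hz
    rw [Function.comp_apply, hequiv, hz, Function.comp_apply]

end Decoding

section Extension

variable {G X Y : Type*} [Group G] [Countable G] [MeasurableSpace X] [StandardBorelSpace X]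
  [MeasurableSpace Y] [StandardBorelSpace Y] {μ : Measure X} [IsProbabilityMeasure μ]
  {ν : Measure Y} [IsProbabilityMeasure ν] {f : PMP G X μ} {h : PMP G Y ν}

theorem WeaklyContains.exists_joining (hfh : WeaklyContains f h) :
    ∃ (ρ : Measure (ShiftSpace G × ShiftSpace G)) (_ : IsProbabilityMeasure ρ) (a : PMP G _ ρ)
      (p : ShiftSpace G × ShiftSpace G → X) (r : ShiftSpace G × ShiftSpace G → Y)
      (κ : X → ShiftSpace G × ShiftSpace G), WeaklyContains f a ∧ IsFactorMap a f p ∧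
      IsFactorMap a h r ∧ (∀ x, p (κ x) = x) ∧ ∀ x, μ {x} ≤ ρ {κ x} := by
  have := nonempty_of_isProbabilityMeasure μ
  have := nonempty_of_isProbabilityMeasure ν
  obtain ⟨e, d, he, hd, hde⟩ := exists_measurable_leftInverse_nat_bool X
  obtain ⟨e', d', he', hd', hde'⟩ := exists_measurable_leftInverse_nat_bool Y
  obtain ⟨D, hD, hDlim⟩ := hfh.exists_tendstoInDistribution_code he'
  let 𝒰 : Ultrafilter (Finset (G × ℕ)) := .of atTop
  let Ψ (J : Finset (G × ℕ)) (x : X) := (f.code e x, f.code (D J) x)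
  have hΨ (J) : Measurable (Ψ J) := (f.measurable_code he).prodMk (f.measurable_code (hD J))
  have hequiv (J) (γ : G) : Function.Semiconj (Ψ J) (f.act γ) (γ • ·) := fun x =>
    Prod.ext (f.semiconj_code e γ x) (f.semiconj_code (D J) γ x)
  obtain ⟨ρ, hρ, hlim⟩ := exists_tendstoInDistribution (μ := μ) hΨ 𝒰
  have := smulInvariantMeasure_of_tendstoInDistribution hΨ hequiv hlim
  have hfst : ρ.map Prod.fst = μ.map (f.code e) :=
    tendstoInDistribution_unique _ (hlim.continuous_comp continuous_fst)
      (tendstoInDistribution_const (f.measurable_code he).aemeasurable)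
  have hsnd : ρ.map Prod.snd = ν.map (h.code e') :=
    tendstoInDistribution_unique _ (hlim.continuous_comp continuous_snd)
      ⟨hDlim.forall_aemeasurable, hDlim.aemeasurable_limit,
        hDlim.tendsto.mono_left (Ultrafilter.of_le _)⟩
  let κ (x : X) := (f.code e x, (𝒰.map fun J => f.code (D J) x).lim)
  have hκ (x : X) : Tendsto (fun J => Ψ J x) 𝒰 (𝓝 (κ x)) :=
    tendsto_const_nhds.prodMk_nhds (𝒰.map fun J => f.code (D J) x).le_nhds_lim
  refine ⟨ρ, hρ, .ofSMul G ρ, _, _, κ,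
    weaklyContains_ofSMul_of_tendstoInDistribution hΨ hequiv hlim,
    isFactorMap_decode_comp he hd hde ⟨measurable_fst, hfst⟩ fun _ _ => rfl,
    isFactorMap_decode_comp he' hd' hde' ⟨measurable_snd, hsnd⟩ fun _ _ => rfl,
    f.leftInverse_decode_code hde, fun x => measure_singleton_le_of_tendsto hlim (hκ x)⟩

end Extension

theorem exists_weakly_equivalent_containing_factor_general {G X Y : Type*} [Group G] [Countable G]
    [MeasurableSpace X] [StandardBorelSpace X] [MeasurableSpace Y] [StandardBorelSpace Y]
    {μ : Measure X} [IsProbabilityMeasure μ] {ν : Measure Y} [IsProbabilityMeasure ν]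
    (f : PMP G X μ) (h : PMP G Y ν) (hwc : WeaklyContains f h) :
    ∃ g : PMP G X μ, WeaklyEquivalent g f ∧ ∃ π : X → Y, IsFactorMap g h π := by
  obtain ⟨ρ, _, a, p, r, κ, hfa, hp, hr, hsec, hatom⟩ := hwc.exists_joining
  have := nonempty_of_isProbabilityMeasure μ
  obtain ⟨Φ⟩ := MeasureIso.nonempty_of_atom_section hp.measurePreserving hsec hatom
  have hg := Φ.symm.isFactorMap_pullback a
  exact ⟨Φ.symm.pullback a, ⟨(hp.comp hg).weaklyContains,
    hfa.trans (Φ.symm.isFactorMap_invFun hg).weaklyContains⟩, _, hr.comp hg⟩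

theorem exists_weakly_equivalent_containing_factor
    {S X : Type} [Fintype S] [MeasurableSpace X] [StandardBorelSpace X]
    {μ : Measure X} [IsProbabilityMeasure μ]
    (f h : PMP (FreeGroup S) X μ) (hwc : WeaklyContains f h) :
    ∃ g : PMP (FreeGroup S) X μ, WeaklyEquivalent g f ∧
      ∃ π : X → X, Measurable π ∧ μ.map π = μ ∧
        ∀ γ : FreeGroup S, ∀ᵐ x ∂μ, π (g.act γ x) = h.act γ (π x) := by
  obtain ⟨g, hgf, π, hπ⟩ := exists_weakly_equivalent_containing_factor_general f h hwc
  exact ⟨g, hgf, π, hπ.measurePreserving.measurable, hπ.measurePreserving.map_eq, hπ.ae_equivariant⟩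
end

section
/- Let α and δ be unitary representations of a countable group Γ on a separable complex Hilbert space H, and suppose α weakly contains δ in the sense of Zimmer. Then there exists a unitary representation β of Γ on a complex Hilbert space such that β is weakly equivalent to α in the sense of Zimmer and β contains δ, i.e. there is a closed β(Γ)-invariant subspace K of the space of β such that the restriction of β to K is unitarily equivalent to δ. -/
open scoped InnerProductSpace

/-- `β` weakly contains `α` in the sense of Zimmer. -/
def ZimmerWeaklyContains {Γ : Type*} [Group Γ]
    {Ha : Type*} [NormedAddCommGroup Ha] [InnerProductSpace ℂ Ha]
    {Hb : Type*} [NormedAddCommGroup Hb] [InnerProductSpace ℂ Hb]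
    (β : Γ →* (Hb ≃ₗᵢ[ℂ] Hb)) (α : Γ →* (Ha ≃ₗᵢ[ℂ] Ha)) : Prop :=
  ∀ n : ℕ, ∀ v : Fin n → Ha, Orthonormal ℂ v →
    ∀ F : Finset Γ, ∀ ε : ℝ, 0 < ε →
      ∃ w : Fin n → Hb, Orthonormal ℂ w ∧
        ∀ i j : Fin n, ∀ γ ∈ F,
          ‖(⟪α γ (v i), v j⟫_ℂ) - (⟪β γ (w i), w j⟫_ℂ)‖ < ε

/-- Weak equivalence in the sense of Zimmer. -/
def ZimmerWeaklyEquivalent {Γ : Type*} [Group Γ]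
    {Ha : Type*} [NormedAddCommGroup Ha] [InnerProductSpace ℂ Ha]
    {Hb : Type*} [NormedAddCommGroup Hb] [InnerProductSpace ℂ Hb]
    (α : Γ →* (Ha ≃ₗᵢ[ℂ] Ha)) (β : Γ →* (Hb ≃ₗᵢ[ℂ] Hb)) : Prop :=
  ZimmerWeaklyContains α β ∧ ZimmerWeaklyContains β α

/-- The compact set `K_{F,n}(α)`: the closure of the set of matrices of inner products
`⟨α(γ)v_i, v_j⟩` over all orthonormal systems `v_1, …, v_n`. -/
def KSet {Γ : Type*} [Group Γ]
    {H : Type*} [NormedAddCommGroup H] [InnerProductSpace ℂ H]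
    (α : Γ →* (H ≃ₗᵢ[ℂ] H)) (F : Finset Γ) (n : ℕ) :
    Set (F × Fin n × Fin n → ℂ) :=
  closure {p | ∃ v : Fin n → H, Orthonormal ℂ v ∧
    p = fun q => ⟪α ↑q.1 (v q.2.1), v q.2.2⟫_ℂ}

/-- A unitary representation of `Γ` on some complex Hilbert space. -/
structure URep (Γ : Type) [Group Γ] where
  H : Type
  [ng : NormedAddCommGroup H]
  [ips : InnerProductSpace ℂ H]
  [cpl : CompleteSpace H]
  ρ : Γ →* (H ≃ₗᵢ[ℂ] H)

attribute [instance] URep.ng URep.ips URep.cpl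

/-!
Weak containment provides, for finitely many vectors of an orthonormal basis of the space of `δ`,
finitely many group elements and a precision, orthonormal vectors in the space of `α` with almost
the same matrix coefficients. Along an ultrafilter finer than the order filter on these data, the
approximants become vectors of the Hilbert space ultrapower of `α` with exactly the matrix
coefficients of the basis, so they span a copy of `δ`.

The ultrapower is weakly equivalent to `α`: constant families embed `α` into it, while finitely many
matrix coefficients of the ultrapower are, up to `ε`, those of the coordinates at a single index.
Such coordinates are only almost orthonormal, and the Gram–Schmidt process repairs them at a cost
which tends to zero with the defect.
-/

open Filter Topology InnerProductSpace
open scoped ENNReal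

section Orthonormalization

variable {𝕜 T E κ : Type*} [RCLike 𝕜] [NormedAddCommGroup E] [InnerProductSpace 𝕜 E]
  {l : Filter T}

theorem tendsto_inner_of_tendsto_sub {x x' y y' : T → E} {a : 𝕜}
    (hx : Tendsto (fun t => x' t - x t) l (𝓝 0)) (hy : Tendsto (fun t => y' t - y t) l (𝓝 0))
    (hxb : IsBoundedUnder (· ≤ ·) l fun t => ‖x t‖) (hyb : IsBoundedUnder (· ≤ ·) l fun t => ‖y t‖)
    (h : Tendsto (fun t => inner 𝕜 (x t) (y t)) l (𝓝 a)) :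
    Tendsto (fun t => inner 𝕜 (x' t) (y' t)) l (𝓝 a) := by
  have hdx : Tendsto (fun t => inner 𝕜 (x' t - x t) (y t)) l (𝓝 0) :=
    hx.op_zero_isBoundedUnder_le hyb (inner 𝕜) norm_inner_le_norm
  have hdy : Tendsto (fun t => inner 𝕜 (x t) (y' t - y t)) l (𝓝 0) :=
    hy.op_zero_isBoundedUnder_le hxb (fun v u => inner 𝕜 u v) fun v u => by
      simpa only [mul_comm] using norm_inner_le_norm u v
  have hdxdy : Tendsto (fun t => inner 𝕜 (x' t - x t) (y' t - y t)) l (𝓝 0) := by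
    simpa using hx.inner (𝕜 := 𝕜) hy
  have hsum := ((h.add hdx).add hdy).add hdxdy
  simp only [add_zero] at hsum
  refine hsum.congr fun t => ?_
  simp only [inner_sub_left, inner_sub_right]
  ring

theorem tendsto_norm_of_tendsto_inner_self {x : T → E} {a : 𝕜}
    (h : Tendsto (fun t => inner 𝕜 (x t) (x t)) l (𝓝 a)) :
    Tendsto (fun t => ‖x t‖) l (𝓝 √(RCLike.re a)) := by
  simpa only [Function.comp_def, ← norm_eq_sqrt_re_inner] using
    ((RCLike.continuous_re.tendsto a).comp h).sqrt

variable [LinearOrder κ] [LocallyFiniteOrderBot κ] {u : T → κ → E}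

theorem tendsto_gramSchmidt_sub [WellFoundedLT κ]
    (hu : ∀ i j, Tendsto (fun t => inner 𝕜 (u t i) (u t j)) l (𝓝 (if i = j then 1 else 0)))
    (k : κ) : Tendsto (fun t => gramSchmidt 𝕜 (u t) k - u t k) l (𝓝 0) := by
  have hub : ∀ i, IsBoundedUnder (· ≤ ·) l fun t => ‖u t i‖ := fun i =>
    (tendsto_norm_of_tendsto_inner_self (hu i i)).isBoundedUnder_le
  induction k using WellFoundedLT.induction with
  | ind k ih =>
    have hproj : ∀ i ∈ Finset.Iio k, Tendsto (fun t =>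
        (inner 𝕜 (gramSchmidt 𝕜 (u t) i) (u t k) / (‖gramSchmidt 𝕜 (u t) i‖ : 𝕜) ^ 2) •
          gramSchmidt 𝕜 (u t) i) l (𝓝 0) := by
      intro i hi
      have hik : i < k := Finset.mem_Iio.1 hi
      have hinner : Tendsto (fun t => inner 𝕜 (gramSchmidt 𝕜 (u t) i) (u t k)) l (𝓝 0) :=
        tendsto_inner_of_tendsto_sub (ih i hik) (by simpa using tendsto_const_nhds)
          (hub i) (hub k) (by simpa [hik.ne] using hu i k)
      have hnorm : Tendsto (fun t => ‖gramSchmidt 𝕜 (u t) i‖) l (𝓝 1) := by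
        simpa using tendsto_norm_of_tendsto_inner_self
          (tendsto_inner_of_tendsto_sub (ih i hik) (ih i hik) (hub i) (hub i) (hu i i))
      have hcoeff := hinner.div
        (((RCLike.continuous_ofReal (K := 𝕜)).tendsto 1 |>.comp hnorm).pow 2) (by simp)
      rw [zero_div] at hcoeff
      exact hcoeff.zero_smul_isBoundedUnder_le hnorm.isBoundedUnder_le
    have hsum := (tendsto_finsetSum _ hproj).neg
    simp only [Finset.sum_const_zero, neg_zero] at hsum
    refine hsum.congr fun t => ?_
    nth_rw 2 [gramSchmidt_def'' 𝕜 (u t) k]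
    abel

theorem tendsto_gramSchmidtNormed_sub [WellFoundedLT κ]
    (hu : ∀ i j, Tendsto (fun t => inner 𝕜 (u t i) (u t j)) l (𝓝 (if i = j then 1 else 0)))
    (k : κ) : Tendsto (fun t => gramSchmidtNormed 𝕜 (u t) k - u t k) l (𝓝 0) := by
  have hgs := tendsto_gramSchmidt_sub hu k
  have hub : IsBoundedUnder (· ≤ ·) l fun t => ‖u t k‖ :=
    (tendsto_norm_of_tendsto_inner_self (hu k k)).isBoundedUnder_le
  have hnorm : Tendsto (fun t => ‖gramSchmidt 𝕜 (u t) k‖) l (𝓝 1) := by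
    simpa using tendsto_norm_of_tendsto_inner_self
      (tendsto_inner_of_tendsto_sub hgs hgs hub hub (hu k k))
  have hcoeff := (((RCLike.continuous_ofReal (K := 𝕜)).tendsto 1 |>.comp hnorm).inv₀
    (by simp)).sub_const 1
  simp only [RCLike.ofReal_one, inv_one, sub_self] at hcoeff
  have hnormed := (hcoeff.zero_smul_isBoundedUnder_le hnorm.isBoundedUnder_le).add hgs
  rw [add_zero] at hnormed
  refine hnormed.congr fun t => ?_
  simp [gramSchmidtNormed, sub_smul]

theorem eventually_orthonormal_gramSchmidtNormed [Finite κ]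
    (hu : ∀ i j, Tendsto (fun t => inner 𝕜 (u t i) (u t j)) l (𝓝 (if i = j then 1 else 0))) :
    ∀ᶠ t in l, Orthonormal 𝕜 (gramSchmidtNormed 𝕜 (u t)) := by
  have hub : ∀ i, IsBoundedUnder (· ≤ ·) l fun t => ‖u t i‖ := fun i =>
    (tendsto_norm_of_tendsto_inner_self (hu i i)).isBoundedUnder_le
  have hnorm : ∀ k, Tendsto (fun t => ‖gramSchmidtNormed 𝕜 (u t) k‖) l (𝓝 1) := fun k => by
    have hgs := tendsto_gramSchmidtNormed_sub hu k
    simpa using tendsto_norm_of_tendsto_inner_self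
      (tendsto_inner_of_tendsto_sub hgs hgs (hub k) (hub k) (hu k k))
  filter_upwards [eventually_all.2 fun k => (hnorm k).eventually_ne one_ne_zero] with t ht
  refine ⟨fun k => gramSchmidtNormed_unit_length' (norm_ne_zero_iff.1 (ht k)), fun i j hij => ?_⟩
  simp [gramSchmidtNormed, inner_smul_left, inner_smul_right, gramSchmidt_orthogonal 𝕜 _ hij]

end Orthonormalization

section Completion

variable (𝕜 V : Type*) [RCLike 𝕜] [SeminormedAddCommGroup V] [InnerProductSpace 𝕜 V]

open UniformSpace

/-- The functorial action of the unitary group of a pre-Hilbert space, whose inner product may be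
degenerate, on the Hilbert space completion. -/
noncomputable def completionUnitary :
    (V ≃ₗᵢ[𝕜] V) →* (Completion V ≃ₗᵢ[𝕜] Completion V) :=
  let j : V →ₗ[𝕜] Completion V := (Completion.toComplₗᵢ (𝕜 := 𝕜)).toLinearMap
  have hj : DenseRange j := Completion.denseRange_coe
  let extend (f : V ≃ₗᵢ[𝕜] V) : Completion V ≃ₗᵢ[𝕜] Completion V :=
    f.toLinearEquiv.extendOfIsometry j j hj hj fun x => by simp [j]
  have extend_coe (f : V ≃ₗᵢ[𝕜] V) (x : V) : extend f x = f x :=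
    f.toLinearEquiv.extendOfIsometry_eq j j hj hj _ x
  { toFun := extend
    map_one' := LinearIsometryEquiv.ext fun x => by
      refine Completion.induction_on x (isClosed_eq (extend 1).continuous continuous_id) fun a => ?_
      rw [extend_coe]
      rfl
    map_mul' := fun f g => LinearIsometryEquiv.ext fun x => by
      refine Completion.induction_on x (isClosed_eq (extend (f * g)).continuous
        ((extend f).continuous.comp (extend g).continuous)) fun a => ?_
      simp only [LinearIsometryEquiv.coe_mul, Function.comp_apply, extend_coe] }

variable {𝕜 V}

theorem completionUnitary_coe (f : V ≃ₗᵢ[𝕜] V) (x : V) :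
    completionUnitary 𝕜 V f (x : Completion V) = (f x : Completion V) :=
  let j : V →ₗ[𝕜] Completion V := (Completion.toComplₗᵢ (𝕜 := 𝕜)).toLinearMap
  f.toLinearEquiv.extendOfIsometry_eq j j Completion.denseRange_coe Completion.denseRange_coe
    (fun x => by simp [j]) x

end Completion

section Ultraproduct

theorem tendsto_limUnder_ultrafilter {ι X : Type*} [PseudoMetricSpace X] [ProperSpace X]
    [Nonempty X] (U : Ultrafilter ι) {f : ι → X} (hf : Bornology.IsBounded (Set.range f)) :
    Tendsto f U (𝓝 (limUnder (U : Filter ι) f)) := by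
  obtain ⟨a, -, ha⟩ := hf.isCompact_closure.ultrafilter_le_nhds (U.map f) <|
    le_principal_iff.2 <| mem_map.2 <| Eventually.of_forall fun i =>
      subset_closure (Set.mem_range_self i)
  exact tendsto_nhds_limUnder ⟨a, ha⟩

variable (𝕜 : Type*) [RCLike 𝕜] {ι : Type*} (U : Ultrafilter ι) (E : ι → Type*)
  [∀ i, NormedAddCommGroup (E i)] [∀ i, InnerProductSpace 𝕜 (E i)]

variable {E} in
theorem tendsto_limUnder_inner (x y : lp E ∞) :
    Tendsto (fun i => inner 𝕜 (x i) (y i)) U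
      (𝓝 (limUnder (U : Filter ι) fun i => inner 𝕜 (x i) (y i))) := by
  refine tendsto_limUnder_ultrafilter U (isBounded_iff_forall_norm_le.2 ⟨‖x‖ * ‖y‖, ?_⟩)
  rintro _ ⟨i, rfl⟩
  have hx : ‖x i‖ ≤ ‖x‖ := lp.norm_apply_le_norm ENNReal.top_ne_zero x i
  have hy : ‖y i‖ ≤ ‖y‖ := lp.norm_apply_le_norm ENNReal.top_ne_zero y i
  exact (norm_inner_le_norm _ _).trans (by gcongr)

/-- The positive semidefinite inner product `⟪x, y⟫ = lim_U ⟪x i, y i⟫` on bounded families. -/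
noncomputable abbrev ultraproductCore : PreInnerProductSpace.Core 𝕜 (lp E ∞) where
  inner x y := limUnder (U : Filter ι) fun i => inner 𝕜 (x i) (y i)
  conj_inner_symm x y := by
    refine tendsto_nhds_unique ?_ (tendsto_limUnder_inner 𝕜 U x y)
    refine ((RCLike.continuous_conj.tendsto _).comp (tendsto_limUnder_inner 𝕜 U y x)).congr ?_
    exact fun i => inner_conj_symm _ _
  re_inner_nonneg x :=
    ge_of_tendsto ((RCLike.continuous_re.tendsto _).comp (tendsto_limUnder_inner 𝕜 U x x)) <|
      Eventually.of_forall fun i => inner_self_nonneg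
  add_left x y z := by
    refine tendsto_nhds_unique (tendsto_limUnder_inner 𝕜 U (x + y) z) ?_
    refine ((tendsto_limUnder_inner 𝕜 U x z).add (tendsto_limUnder_inner 𝕜 U y z)).congr ?_
    exact fun i => (inner_add_left _ _ _).symm
  smul_left x y r := by
    refine tendsto_nhds_unique (tendsto_limUnder_inner 𝕜 U (r • x) y) ?_
    refine ((tendsto_limUnder_inner 𝕜 U x y).const_mul _).congr ?_
    exact fun i => (inner_smul_left _ _ _).symm

/-- The pre-Hilbert space of bounded families in `∏ i, E i` with the inner product
`lim_U ⟪x i, y i⟫`; its completion is the Hilbert space ultraproduct of the `E i`. It is a synonym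
of `lp E ∞`, and `𝕜` and `U` are parameters of the type because the seminorm depends on them. -/
def PreUltraproduct (𝕜 : Type*) [RCLike 𝕜] {ι : Type*} (_U : Ultrafilter ι) (E : ι → Type*)
    [∀ i, NormedAddCommGroup (E i)] [∀ i, InnerProductSpace 𝕜 (E i)] : Type _ :=
  lp E ∞

namespace PreUltraproduct

instance : DFunLike (PreUltraproduct 𝕜 U E) ι E where
  coe x := Subtype.val (p := (· ∈ lp E ∞)) x
  coe_injective := Subtype.val_injective

noncomputable instance : SeminormedAddCommGroup (PreUltraproduct 𝕜 U E) :=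
  letI := ultraproductCore 𝕜 U E
  InnerProductSpace.Core.toSeminormedAddCommGroup (𝕜 := 𝕜) (F := lp E ∞)

noncomputable instance : InnerProductSpace 𝕜 (PreUltraproduct 𝕜 U E) :=
  InnerProductSpace.ofCore (ultraproductCore 𝕜 U E)

variable {𝕜 U E}

theorem tendsto_inner (x y : PreUltraproduct 𝕜 U E) :
    Tendsto (fun i => inner 𝕜 (x i) (y i)) U (𝓝 (inner 𝕜 x y)) :=
  tendsto_limUnder_inner 𝕜 U _ _

variable (𝕜 U E)

/-- The coordinatewise action of a family of unitaries. -/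
noncomputable def piUnitary :
    (∀ i, E i ≃ₗᵢ[𝕜] E i) →* (PreUltraproduct 𝕜 U E ≃ₗᵢ[𝕜] PreUltraproduct 𝕜 U E) :=
  let map (f : ∀ i, E i ≃ₗᵢ[𝕜] E i) (x : lp E ∞) : lp E ∞ :=
    ⟨fun i => f i (x i), memℓp_infty (by simpa using (lp.memℓp x).bddAbove)⟩
  let toLinearEquiv (f : ∀ i, E i ≃ₗᵢ[𝕜] E i) :
      PreUltraproduct 𝕜 U E ≃ₗ[𝕜] PreUltraproduct 𝕜 U E :=
    { toFun := map f
      invFun := map f⁻¹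
      map_add' := fun x y => lp.ext <| funext fun i => map_add (f i) (x.1 i) (y.1 i)
      map_smul' := fun c x => lp.ext <| funext fun i => map_smul (f i) c (x.1 i)
      left_inv := fun x => lp.ext <| funext fun i => (f i).symm_apply_apply (x.1 i)
      right_inv := fun x => lp.ext <| funext fun i => (f i).apply_symm_apply (x.1 i) }
  { toFun := fun f => (toLinearEquiv f).isometryOfInner fun x y =>
      tendsto_nhds_unique (tendsto_inner (toLinearEquiv f x) (toLinearEquiv f y)) <|
        (tendsto_inner x y).congr fun i => ((f i).inner_map_map _ _).symm
    map_one' := rfl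
    map_mul' := fun _ _ => rfl }

end PreUltraproduct

variable {𝕜 E} {G : Type*} [Group G]

/-- The Hilbert space ultraproduct along `U` of a family of unitary representations. -/
noncomputable def ultraproductRep (π : ∀ i, G →* (E i ≃ₗᵢ[𝕜] E i)) :
    G →* (UniformSpace.Completion (PreUltraproduct 𝕜 U E) ≃ₗᵢ[𝕜]
      UniformSpace.Completion (PreUltraproduct 𝕜 U E)) :=
  (completionUnitary 𝕜 _).comp ((PreUltraproduct.piUnitary 𝕜 U E).comp (MonoidHom.pi π))

theorem tendsto_inner_ultraproductRep (π : ∀ i, G →* (E i ≃ₗᵢ[𝕜] E i)) (g : G)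
    (x y : PreUltraproduct 𝕜 U E) :
    Tendsto (fun i => inner 𝕜 (π i g (x i)) (y i)) U
      (𝓝 (inner 𝕜 (ultraproductRep U π g x) (y : UniformSpace.Completion _))) := by
  have hinner : inner 𝕜 (ultraproductRep U π g x) (y : UniformSpace.Completion _) =
      inner 𝕜 (PreUltraproduct.piUnitary 𝕜 U E (MonoidHom.pi π g) x) y := by
    rw [ultraproductRep, MonoidHom.comp_apply, completionUnitary_coe,
      UniformSpace.Completion.inner_coe, MonoidHom.comp_apply]
  rw [hinner]
  exact PreUltraproduct.tendsto_inner _ _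

end Ultraproduct

theorem exists_intertwining_of_inner_eq {𝕜 G L K κ : Type*} [RCLike 𝕜] [Group G]
    [NormedAddCommGroup L] [InnerProductSpace 𝕜 L]
    [NormedAddCommGroup K] [InnerProductSpace 𝕜 K] [CompleteSpace K]
    {δ : G →* (L ≃ₗᵢ[𝕜] L)} {β : G →* (K ≃ₗᵢ[𝕜] K)} (b : HilbertBasis κ 𝕜 L) {e : κ → K}
    (h : ∀ g k l, inner 𝕜 (β g (e k)) (e l) = inner 𝕜 (δ g (b k)) (b l)) :
    ∃ Ψ : L →ₗᵢ[𝕜] K, ∀ g x, Ψ (δ g x) = β g (Ψ x) := by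
  classical
  have he : Orthonormal 𝕜 e := orthonormal_iff_ite.2 fun k l => by
    simpa using (h 1 k l).trans (by simpa using orthonormal_iff_ite.1 b.orthonormal k l)
  let Ψ : L →ₗᵢ[𝕜] K := he.orthogonalFamily.linearIsometry.comp b.repr.toLinearIsometry
  have hΨ : ∀ k, Ψ (b k) = e k := fun k => by
    simp [Ψ, b.repr_self, OrthogonalFamily.linearIsometry_apply_single]
  have hdense : Dense (Submodule.span 𝕜 (Set.range b) : Set L) :=
    Submodule.dense_iff_topologicalClosure_eq_top.2 b.dense_span
  have hinner : ∀ g k x, inner 𝕜 (β g (e k)) (Ψ x) = inner 𝕜 (δ g (b k)) x := by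
    intro g k
    refine DFunLike.congr_fun (f := (innerSL 𝕜 (β g (e k))).comp Ψ.toContinuousLinearMap)
      (g := innerSL 𝕜 (δ g (b k))) ?_
    refine ContinuousLinearMap.ext_on hdense ?_
    rintro _ ⟨l, rfl⟩
    simpa [hΨ] using h g k l
  -- The range of `Ψ` is not yet known to be invariant, so `hinner` only identifies `Ψ (δ g (b k))`
  -- with the projection of `β g (e k)` to it; the two vectors agree because their norms do.
  have hbasis : ∀ g k, β g (e k) = Ψ (δ g (b k)) := fun g k => by
    refine eq_of_norm_le_re_inner_eq_norm_sq (𝕜 := 𝕜) (by simp [← hΨ]) ?_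
    rw [hinner, inner_self_eq_norm_sq, Ψ.norm_map]
  refine ⟨Ψ, fun g => DFunLike.congr_fun
    (f := Ψ.toContinuousLinearMap.comp (δ g : L →L[𝕜] L))
    (g := (β g : K →L[𝕜] K).comp Ψ.toContinuousLinearMap) ?_⟩
  refine ContinuousLinearMap.ext_on hdense ?_
  rintro _ ⟨k, rfl⟩
  simp [hΨ, hbasis]

section WeakContainment

variable {Γ : Type*} [Group Γ]
  {Ha : Type*} [NormedAddCommGroup Ha] [InnerProductSpace ℂ Ha] {α : Γ →* (Ha ≃ₗᵢ[ℂ] Ha)}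
  {Hb : Type*} [NormedAddCommGroup Hb] [InnerProductSpace ℂ Hb] {β : Γ →* (Hb ≃ₗᵢ[ℂ] Hb)}

theorem zimmerWeaklyContains_of_approx
    (h : ∀ n : ℕ, ∀ v : Fin n → Ha, Orthonormal ℂ v → ∀ F : Finset Γ, ∀ ε : ℝ, 0 < ε →
      ∃ w : Fin n → Hb, ∀ i j, ∀ γ ∈ F, ‖⟪α γ (v i), v j⟫_ℂ - ⟪β γ (w i), w j⟫_ℂ‖ < ε) :
    ZimmerWeaklyContains β α := by
  classical
  intro n v hv F ε hε
  choose u hu using fun m : ℕ => h n v hv (insert 1 F) (1 / ((m : ℝ) + 1)) (by positivity)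
  have hlim : ∀ i j, ∀ γ ∈ insert 1 F,
      Tendsto (fun m => ⟪β γ (u m i), u m j⟫_ℂ) atTop (𝓝 ⟪α γ (v i), v j⟫_ℂ) := fun i j γ hγ =>
    tendsto_iff_norm_sub_tendsto_zero.2 <| squeeze_zero (fun _ => norm_nonneg _)
      (fun m => (norm_sub_rev _ _).trans_le (hu m i j γ hγ).le)
      tendsto_one_div_add_atTop_nhds_zero_nat
  have hgram : ∀ i j, Tendsto (fun m => ⟪u m i, u m j⟫_ℂ) atTop (𝓝 (if i = j then 1 else 0)) :=
    fun i j => by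
      simpa [orthonormal_iff_ite.1 hv i j] using hlim i j 1 (Finset.mem_insert_self 1 F)
  have hbdd : ∀ i, IsBoundedUnder (· ≤ ·) atTop fun m => ‖u m i‖ := fun i =>
    (tendsto_norm_of_tendsto_inner_self (hgram i i)).isBoundedUnder_le
  let w (m : ℕ) : Fin n → Hb := gramSchmidtNormed ℂ (u m)
  have hwlim : ∀ i j, ∀ γ ∈ F,
      Tendsto (fun m => ⟪β γ (w m i), w m j⟫_ℂ) atTop (𝓝 ⟪α γ (v i), v j⟫_ℂ) := by
    intro i j γ hγ
    have hβ : Tendsto (fun m => β γ (w m i) - β γ (u m i)) atTop (𝓝 0) := by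
      simpa [Function.comp_def] using
        ((β γ).continuous.tendsto 0).comp (tendsto_gramSchmidtNormed_sub hgram i)
    exact tendsto_inner_of_tendsto_sub hβ (tendsto_gramSchmidtNormed_sub hgram j)
      (by simpa using hbdd i) (hbdd j) (hlim i j γ (Finset.mem_insert_of_mem hγ))
  have hclose : ∀ᶠ m in atTop, ∀ i j, ∀ γ ∈ F,
      ‖⟪α γ (v i), v j⟫_ℂ - ⟪β γ (w m i), w m j⟫_ℂ‖ < ε := by
    simp only [eventually_all, eventually_all_finset]
    intro i j γ hγ
    simpa only [dist_comm, dist_eq_norm] using Metric.tendsto_nhds.1 (hwlim i j γ hγ) ε hε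
  obtain ⟨m, hortho, hm⟩ := ((eventually_orthonormal_gramSchmidtNormed hgram).and hclose).exists
  exact ⟨w m, hortho, hm⟩

theorem ZimmerWeaklyContains.exists_orthonormal {κ : Type*} [Finite κ]
    (h : ZimmerWeaklyContains β α) {v : κ → Ha} (hv : Orthonormal ℂ v) (F : Finset Γ)
    {ε : ℝ} (hε : 0 < ε) :
    ∃ w : κ → Hb, Orthonormal ℂ w ∧
      ∀ k l, ∀ γ ∈ F, ‖⟪α γ (v k), v l⟫_ℂ - ⟪β γ (w k), w l⟫_ℂ‖ < ε := by
  obtain ⟨n, ⟨e⟩⟩ := Finite.exists_equiv_fin κ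
  obtain ⟨w, hw, hclose⟩ := h n (v ∘ e.symm) (hv.comp _ e.symm.injective) F ε hε
  exact ⟨w ∘ e, hw.comp _ e.injective, fun k l γ hγ => by simpa using hclose (e k) (e l) γ hγ⟩

theorem ZimmerWeaklyContains.exists_tendsto {κ : Type*} (h : ZimmerWeaklyContains β α)
    {v : κ → Ha} (hv : Orthonormal ℂ v) :
    ∃ w : Finset κ × Finset Γ × ℕ → κ → Hb, (∀ t k, ‖w t k‖ ≤ 1) ∧
      ∀ γ k l, Tendsto (fun t => ⟪β γ (w t k), w t l⟫_ℂ) atTop (𝓝 ⟪α γ (v k), v l⟫_ℂ) := by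
  classical
  choose w hw hclose using fun t : Finset κ × Finset Γ × ℕ =>
    h.exists_orthonormal (hv.comp ((↑) : t.1 → κ) Subtype.val_injective) t.2.1
      (ε := 1 / ((t.2.2 : ℝ) + 1)) (by positivity)
  refine ⟨fun t k => if hk : k ∈ t.1 then w t ⟨k, hk⟩ else 0, fun t k => ?_, fun γ k l => ?_⟩
  · dsimp only
    split_ifs with hk
    · exact ((hw t).norm_eq_one _).le
    · simp
  · have hε : Tendsto (fun t : Finset κ × Finset Γ × ℕ => 1 / ((t.2.2 : ℝ) + 1)) atTop (𝓝 0) :=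
      tendsto_one_div_add_atTop_nhds_zero_nat.comp <| by
        rw [← prod_atTop_atTop_eq, ← prod_atTop_atTop_eq]
        exact tendsto_snd.comp tendsto_snd
    refine tendsto_iff_norm_sub_tendsto_zero.2 (squeeze_zero' (by simp) ?_ hε)
    filter_upwards [eventually_ge_atTop ({k, l}, {γ}, 0)] with t ⟨hS, hF, _⟩
    have hk : k ∈ t.1 := hS (by simp)
    have hl : l ∈ t.1 := hS (by simp)
    rw [norm_sub_rev, dif_pos hk, dif_pos hl]
    exact (hclose t ⟨k, hk⟩ ⟨l, hl⟩ γ (hF (by simp))).le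

variable {ι : Type*} (U : Ultrafilter ι)

theorem zimmerWeaklyContains_ultrapower (α : Γ →* (Ha ≃ₗᵢ[ℂ] Ha)) :
    ZimmerWeaklyContains (ultraproductRep U fun _ => α) α := by
  refine zimmerWeaklyContains_of_approx fun n v _ F ε hε => ?_
  let const (x : Ha) : PreUltraproduct ℂ U fun _ => Ha :=
    ⟨fun _ => x, memℓp_infty ⟨‖x‖, by rintro _ ⟨_, rfl⟩; rfl⟩⟩
  refine ⟨fun i => const (v i), fun i j γ _ => ?_⟩
  rw [tendsto_nhds_unique
    (tendsto_inner_ultraproductRep U (fun _ => α) γ (const (v i)) (const (v j)))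
    (tendsto_const_nhds (x := ⟪α γ (v i), v j⟫_ℂ))]
  simpa [const] using hε

theorem zimmerWeaklyContains_of_ultrapower (α : Γ →* (Ha ≃ₗᵢ[ℂ] Ha)) :
    ZimmerWeaklyContains α (ultraproductRep U fun _ => α) := by
  refine zimmerWeaklyContains_of_approx fun n v _ F ε hε => ?_
  set β := ultraproductRep U fun _ => α
  obtain ⟨x, hx⟩ : ∃ x : Fin n → PreUltraproduct ℂ U fun _ => Ha, ∀ i j, ∀ γ ∈ F,
      ‖⟪β γ (v i), v j⟫_ℂ - ⟪β γ (x i), (x j : UniformSpace.Completion _)⟫_ℂ‖ < ε := by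
    have hdense := DenseRange.piMap fun _ : Fin n =>
      UniformSpace.Completion.denseRange_coe (α := PreUltraproduct ℂ U fun _ => Ha)
    have hnhds : ∀ᶠ y in 𝓝 v, ∀ i j, ∀ γ ∈ F,
        ‖⟪β γ (v i), v j⟫_ℂ - ⟪β γ (y i), y j⟫_ℂ‖ < ε := by
      simp only [eventually_all, eventually_all_finset]
      intro i j γ _
      have hcont : Continuous fun y : Fin n → UniformSpace.Completion (PreUltraproduct ℂ U _) =>
          ‖⟪β γ (v i), v j⟫_ℂ - ⟪β γ (y i), y j⟫_ℂ‖ := by fun_prop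
      exact hcont.continuousAt.eventually_lt_const (by simpa using hε)
    obtain ⟨x, hx⟩ := hdense.mem_nhds hnhds
    exact ⟨x, hx⟩
  have hclose : ∀ᶠ t in (U : Filter ι), ∀ i j, ∀ γ ∈ F,
      ‖⟪β γ (v i), v j⟫_ℂ - ⟪α γ (x i t), x j t⟫_ℂ‖ < ε := by
    simp only [eventually_all, eventually_all_finset]
    intro i j γ hγ
    exact (tendsto_const_nhds.sub (tendsto_inner_ultraproductRep U (fun _ => α) γ (x i) (x j))).norm
      |>.eventually_lt_const (hx i j γ hγ)
  obtain ⟨t, ht⟩ := hclose.exists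
  exact ⟨fun i => x i t, ht⟩

end WeakContainment

theorem ZimmerWeaklyContains.exists_intertwining_ultrapower {Γ L H : Type*} [Group Γ]
    [NormedAddCommGroup L] [InnerProductSpace ℂ L] [CompleteSpace L]
    [NormedAddCommGroup H] [InnerProductSpace ℂ H]
    {δ : Γ →* (L ≃ₗᵢ[ℂ] L)} {α : Γ →* (H ≃ₗᵢ[ℂ] H)} (h : ZimmerWeaklyContains α δ) :
    ∃ (s : Set L) (U : Ultrafilter (Finset s × Finset Γ × ℕ))
      (Ψ : L →ₗᵢ[ℂ] UniformSpace.Completion (PreUltraproduct ℂ U fun _ => H)),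
      ∀ γ x, Ψ (δ γ x) = ultraproductRep U (fun _ => α) γ (Ψ x) := by
  classical
  obtain ⟨s, b, -⟩ := exists_hilbertBasis ℂ L
  obtain ⟨w, hbound, hlim⟩ := h.exists_tendsto b.orthonormal
  let U : Ultrafilter (Finset s × Finset Γ × ℕ) := Ultrafilter.of atTop
  let e (k : s) : PreUltraproduct ℂ U fun _ => H :=
    ⟨fun t => w t k, memℓp_infty ⟨1, by rintro _ ⟨t, rfl⟩; exact hbound t k⟩⟩
  refine ⟨s, U, exists_intertwining_of_inner_eq b (e := fun k => e k) fun γ k l => ?_⟩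
  exact tendsto_nhds_unique (tendsto_inner_ultraproductRep U (fun _ => α) γ (e k) (e l))
    ((hlim γ k l).mono_left (Ultrafilter.of_le _))

theorem exists_weakly_equivalent_containing_subrepresentation_general
    {Γ : Type} [Group Γ]
    {H : Type} [NormedAddCommGroup H] [InnerProductSpace ℂ H]
    {L : Type} [NormedAddCommGroup L] [InnerProductSpace ℂ L] [CompleteSpace L]
    (α : Γ →* (H ≃ₗᵢ[ℂ] H)) (δ : Γ →* (L ≃ₗᵢ[ℂ] L))
    (hαδ : ZimmerWeaklyContains α δ) :
    ∃ β : URep Γ, ZimmerWeaklyEquivalent β.ρ α ∧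
      ∃ K : Submodule ℂ β.H, IsClosed (K : Set β.H) ∧
        (∀ (γ : Γ), ∀ x ∈ K, β.ρ γ x ∈ K) ∧
        ∃ ψ : L ≃ₗᵢ[ℂ] K, ∀ (γ : Γ) (x : L), (ψ (δ γ x) : β.H) = β.ρ γ (ψ x) := by
  obtain ⟨s, U, Ψ, hΨ⟩ := hαδ.exists_intertwining_ultrapower
  refine ⟨⟨_, ultraproductRep U fun _ => α⟩,
    ⟨zimmerWeaklyContains_ultrapower U α, zimmerWeaklyContains_of_ultrapower U α⟩,
    LinearMap.range Ψ.toLinearMap, Ψ.isometry.isClosedEmbedding.isClosed_range, ?_,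
    Ψ.equivRange, hΨ⟩
  rintro γ _ ⟨x, rfl⟩
  exact ⟨δ γ x, hΨ γ x⟩

theorem exists_weakly_equivalent_containing_subrepresentation
    {Γ : Type} [Group Γ] [Countable Γ]
    {H : Type} [NormedAddCommGroup H] [InnerProductSpace ℂ H] [CompleteSpace H]
    [TopologicalSpace.SeparableSpace H]
    (α δ : Γ →* (H ≃ₗᵢ[ℂ] H))
    (hαδ : ZimmerWeaklyContains α δ) :
    ∃ β : URep Γ, ZimmerWeaklyEquivalent β.ρ α ∧
      ∃ K : Submodule ℂ β.H, IsClosed (K : Set β.H) ∧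
        (∀ (γ : Γ), ∀ x ∈ K, β.ρ γ x ∈ K) ∧
        ∃ ψ : H ≃ₗᵢ[ℂ] K, ∀ (γ : Γ) (x : H), (ψ (δ γ x) : β.H) = β.ρ γ (ψ x) :=
  exists_weakly_equivalent_containing_subrepresentation_general α δ hαδ
end
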